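/- Let N ≥ 2, κ ∈ (0, 1/4], α₊ = 1 + √(1−4κ), and 1 < q < q_c = (2N+α₊)/(2N−4+α₊), so that ℓ_{N,q} = (2/(q−1))(2q/(q−1) − N) > μ_{κ,1} = (α₊/2)(N + α₊/2 − 2). Define, for functions w on (0, π/2), the functional J(w) = ∫₀^{π/2} [ w'(θ)² − (ℓ_{N,q} − μ_{κ,1}) w(θ)² + (2/(q+1)) (cos θ)^{(q−1)α₊/2} |w(θ)|^{q+1} ] (cos θ)^{α₊} (sin θ)^{N−2} dθ, and call w admissible if w is C¹ on (0, π/2) with ∫₀^{π/2} (w'² + w²)(cos θ)^{α₊}(sin θ)^{N−2} dθ < ∞ and ∫₀^{π/2} |w|^{q+1}(cos θ)^{(q+1)α₊/2}(sin θ)^{N−2} dθ < ∞. Then there exists an admissible nonnegative smooth function w₀ with J(w₀) < 0 and J(w₀) ≤ J(w) for every admissible w. (This is the zonal form of the existence of a nontrivial minimizer of the energy functional 𝒥_κ when ℓ_{N,q} > μ_{κ,1}; the corresponding ω = ρ_κ w₀ is a positive separable solution profile.) -/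

import Mathlib

open Real MeasureTheory

/-- The zonal energy functional `𝒥_κ` on `(0, π/2)`:
`J(w) = ∫₀^{π/2} [w'² - (ℓ-μ₁)w² + (2/(q+1))(cos θ)^{(q-1)α/2}|w|^{q+1}] (cos θ)^α (sin θ)^{N-2} dθ`. -/
noncomputable def zonalJ (N : ℕ) (α ℓ μ₁ q : ℝ) (w : ℝ → ℝ) : ℝ :=
  ∫ θ in Set.Ioo 0 (π/2),
    ((deriv w θ)^2 - (ℓ - μ₁) * (w θ)^2
      + (2/(q+1)) * (Real.cos θ) ^ ((q-1)*α/2) * |w θ| ^ (q+1))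
    * (Real.cos θ) ^ α * (Real.sin θ)^(N-2)

/-- Admissibility for `zonalJ`: `w` is `C¹` on `(0, π/2)` with finite weighted `H¹` norm
and finite weighted `L^{q+1}` norm. -/
def ZonalAdmissible (N : ℕ) (α q : ℝ) (w : ℝ → ℝ) : Prop :=
  ContDiffOn ℝ 1 w (Set.Ioo 0 (π/2)) ∧
  MeasureTheory.IntegrableOn
    (fun θ => ((deriv w θ)^2 + (w θ)^2) * (Real.cos θ) ^ α * (Real.sin θ)^(N-2))
    (Set.Ioo 0 (π/2)) volume ∧
  MeasureTheory.IntegrableOn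
    (fun θ => |w θ| ^ (q+1) * (Real.cos θ) ^ ((q+1)*α/2) * (Real.sin θ)^(N-2))
    (Set.Ioo 0 (π/2)) volume

/-!
The Euler–Lagrange equation of the energy is the singular equation `(p w')' + p f(t, w) = 0` with
`p = (cos t)^α (sin t)^(N-2)` and `f(t, w) = l w - (cos t)^((q-1)α/2) w^q`, where `l = ℓ - μ₁`.
A small constant is a subsolution and, for `M` large, `M exp (-l cos² t)` is a supersolution.
Multiplication by a high power of `cos` (Doob's transform) makes the nonlinearity monotone and turns
the missing boundary condition at `π/2` into a Dirichlet condition. The solution operator is then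
monotone, and its least supersolution between the barriers is a fixed point (Knaster–Tarski), which
gives a solution `w₀` bounded above and away from zero.

Since `f(t, w₀) = V w₀` with `V` bounded, the flux `p w₀'` is small at both endpoints and Picone's
identity gives `∫ p w'² ≥ ∫ p V w²` for every admissible `w`, with equality at `w₀`. Young's
inequality between `w₀^(q-1) w²` and `|w|^(q+1)` then shows that `w₀` minimizes the energy.
-/

noncomputable section

open Set Filter Topology

section EndpointLimits

theorem monotoneOn_Ioo_of_hasDerivAt_nonneg {a b : ℝ} {u u' : ℝ → ℝ}
    (hderiv : ∀ t ∈ Ioo a b, HasDerivAt u (u' t) t) (hnonneg : ∀ t ∈ Ioo a b, 0 ≤ u' t) :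
    MonotoneOn u (Ioo a b) := by
  refine monotoneOn_of_hasDerivWithinAt_nonneg (convex_Ioo a b) (f' := u')
    (fun t ht => (hderiv t ht).continuousAt.continuousWithinAt) ?_ ?_ <;> rw [interior_Ioo]
  · exact fun t ht => (hderiv t ht).hasDerivWithinAt
  · exact hnonneg

theorem nonneg_of_hasDerivAt_nonneg_of_tendsto_zero {b : ℝ} {u u' : ℝ → ℝ}
    (hderiv : ∀ t ∈ Ioo 0 b, HasDerivAt u (u' t) t) (hnonneg : ∀ t ∈ Ioo 0 b, 0 ≤ u' t)
    (hlim : Tendsto u (𝓝[>] 0) (𝓝 0)) {t : ℝ} (ht : t ∈ Ioo 0 b) : 0 ≤ u t := by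
  refine le_of_tendsto hlim ?_
  filter_upwards [Ioo_mem_nhdsGT ht.1] with s hs
  exact monotoneOn_Ioo_of_hasDerivAt_nonneg hderiv hnonneg ⟨hs.1, hs.2.trans ht.2⟩ ht hs.2.le

theorem abs_le_mul_abs_sub_of_tendsto_zero {s : Set ℝ} (hs : Convex ℝ s) {u u' : ℝ → ℝ} {D : ℝ}
    (hderiv : ∀ x ∈ s, HasDerivAt u (u' x) x) (hbound : ∀ x ∈ s, |u' x| ≤ D)
    {l : Filter ℝ} [l.NeBot] {x₀ : ℝ} (hl : l ≤ 𝓝 x₀) (hsl : s ∈ l) (hu : Tendsto u l (𝓝 0))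
    {t : ℝ} (ht : t ∈ s) : |u t| ≤ D * |t - x₀| := by
  have hleft : Tendsto (fun x => |u t - u x|) l (𝓝 |u t - 0|) := (tendsto_const_nhds.sub hu).abs
  have hright : Tendsto (fun x => D * |t - x|) l (𝓝 (D * |t - x₀|)) :=
    ((tendsto_const_nhds.sub (tendsto_id.mono_right hl)).abs).const_mul D
  rw [sub_zero] at hleft
  refine le_of_tendsto_of_tendsto hleft hright ?_
  filter_upwards [hsl] with x hx
  exact hs.norm_image_sub_le_of_norm_hasDerivWithin_le
    (fun y hy => (hderiv y hy).hasDerivWithinAt) hbound hx ht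

theorem integrableOn_of_hasDerivAt_of_abs_le {a b : ℝ} {u u' g : ℝ → ℝ}
    (hderiv : ∀ t ∈ Ioo a b, HasDerivAt u (u' t) t) (hg : IntegrableOn g (Ioo a b))
    (hle : ∀ t ∈ Ioo a b, |u' t| ≤ g t) : IntegrableOn u' (Ioo a b) := by
  refine hg.mono' ((measurable_deriv u).aestronglyMeasurable.congr ?_) ?_
  · filter_upwards [ae_restrict_mem measurableSet_Ioo] with t ht using (hderiv t ht).deriv
  · filter_upwards [ae_restrict_mem measurableSet_Ioo] with t ht using hle t ht

theorem intervalIntegrable_of_continuousOn_Ico {b : ℝ} {g : ℝ → ℝ}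
    (hg : ContinuousOn g (Ico 0 b)) {t : ℝ} (ht : t ∈ Ico 0 b) : IntervalIntegrable g volume 0 t :=
  (hg.mono (Icc_subset_Ico_right ht.2)).intervalIntegrable_of_Icc ht.1

theorem hasDerivAt_integral_of_continuousOn_Ico {b : ℝ} {g : ℝ → ℝ} (hg : ContinuousOn g (Ico 0 b))
    {t : ℝ} (ht : t ∈ Ioo 0 b) : HasDerivAt (fun t => ∫ s in 0..t, g s) (g t) t :=
  intervalIntegral.integral_hasDerivAt_right
    (intervalIntegrable_of_continuousOn_Ico hg (Ioo_subset_Ico_self ht))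
    ((hg.mono Ioo_subset_Ico_self).stronglyMeasurableAtFilter isOpen_Ioo t ht)
    (hg.continuousAt (Ico_mem_nhds ht.1 ht.2))

theorem tendsto_nhdsGT_of_continuousOn_Icc {b : ℝ} {u : ℝ → ℝ} (hb : 0 < b)
    (hu : ContinuousOn u (Icc 0 b)) : Tendsto u (𝓝[>] 0) (𝓝 (u 0)) := by
  have h0 := (hu 0 ⟨le_rfl, hb.le⟩).mono Ioc_subset_Icc_self
  rwa [ContinuousWithinAt, nhdsWithin_Ioc_eq_nhdsGT hb] at h0

theorem tendsto_integral_nhdsGT_zero {b : ℝ} {g : ℝ → ℝ} (hb : 0 < b)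
    (hg : ContinuousOn g (Ico 0 b)) : Tendsto (fun t => ∫ s in 0..t, g s) (𝓝[>] 0) (𝓝 0) := by
  have hhalf : b / 2 ∈ Ico 0 b := ⟨by positivity, half_lt_self hb⟩
  have hcont := intervalIntegral.continuousOn_primitive_interval'
    (intervalIntegrable_of_continuousOn_Ico hg hhalf) left_mem_uIcc
  rw [uIcc_of_le hhalf.1] at hcont
  simpa using tendsto_nhdsGT_of_continuousOn_Icc (half_pos hb) hcont

theorem exists_tendsto_of_integrableOn_deriv {a b : ℝ} {u u' : ℝ → ℝ} (hab : a < b)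
    (hderiv : ∀ t ∈ Ioo a b, HasDerivAt u (u' t) t) (hint : IntegrableOn u' (Ioo a b)) :
    ∃ La Lb, Tendsto u (𝓝[>] a) (𝓝 La) ∧ Tendsto u (𝓝[<] b) (𝓝 Lb) := by
  obtain ⟨c, hc⟩ := nonempty_Ioo.2 hab
  have hint' : IntervalIntegrable u' volume a b := by
    rwa [intervalIntegrable_iff_integrableOn_Ioo_of_le hab.le]
  have hcont : ContinuousOn (fun t => u c + ∫ s in c..t, u' s) (Icc a b) := by
    have hprim := intervalIntegral.continuousOn_primitive_interval' hint'
      (Icc_subset_uIcc (Ioo_subset_Icc_self hc))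
    rw [uIcc_of_le hab.le] at hprim
    exact continuousOn_const.add hprim
  have hftc : ∀ t ∈ Ioo a b, u c + ∫ s in c..t, u' s = u t := fun t ht => by
    have hsub : uIcc c t ⊆ Ioo a b := ordConnected_Ioo.uIcc_subset hc ht
    rw [intervalIntegral.integral_eq_sub_of_hasDerivAt (fun s hs => hderiv s (hsub hs))
      (hint.mono_set hsub).intervalIntegrable]
    ring
  have hleft := (hcont a (left_mem_Icc.2 hab.le)).mono Ioo_subset_Icc_self
  have hright := (hcont b (right_mem_Icc.2 hab.le)).mono Ioo_subset_Icc_self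
  rw [ContinuousWithinAt, nhdsWithin_Ioo_eq_nhdsGT hab] at hleft
  rw [ContinuousWithinAt, nhdsWithin_Ioo_eq_nhdsLT hab] at hright
  refine ⟨_, _, hleft.congr' ?_, hright.congr' ?_⟩
  · filter_upwards [Ioo_mem_nhdsGT hab] with t ht using hftc t ht
  · filter_upwards [Ioo_mem_nhdsLT hab] with t ht using hftc t ht

theorem tendsto_atTop_of_div_sub_le_deriv {c b δ : ℝ} {u u' : ℝ → ℝ} (hcb : c < b) (hδ : 0 < δ)
    (hderiv : ∀ t ∈ Ioo c b, HasDerivAt u (u' t) t)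
    (hle : ∀ t ∈ Ioo c b, δ / (b - t) ≤ u' t) : Tendsto u (𝓝[<] b) atTop := by
  have hlog : ∀ t ∈ Ioo c b, HasDerivAt (fun t => u t + δ * log (b - t))
      (u' t - δ / (b - t)) t := fun t ht => by
    have hbt := sub_pos.2 ht.2
    refine ((hderiv t ht).add ((((hasDerivAt_id t).const_sub b).log hbt.ne').const_mul
      δ)).congr_deriv ?_
    simp only [id]
    ring
  have hmono : MonotoneOn (fun t => u t + δ * log (b - t)) (Ioo c b) :=
    monotoneOn_Ioo_of_hasDerivAt_nonneg hlog fun t ht => sub_nonneg.2 (hle t ht)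
  obtain ⟨d, hd⟩ := nonempty_Ioo.2 hcb
  have hsub : Tendsto (fun t => b - t) (𝓝[<] b) (𝓝[>] 0) := by
    refine tendsto_nhdsWithin_iff.2 ⟨?_, ?_⟩
    · exact ((continuous_const.sub continuous_id).tendsto' b 0 (sub_self b)).mono_left
        nhdsWithin_le_nhds
    · filter_upwards [self_mem_nhdsWithin] with t ht using mem_Ioi.2 (sub_pos.2 (mem_Iio.1 ht))
  have hlower : Tendsto (fun t => u d + δ * log (b - d) + δ * -log (b - t)) (𝓝[<] b) atTop :=
    tendsto_atTop_add_const_left _ _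
      ((tendsto_neg_atBot_atTop.comp (tendsto_log_nhdsGT_zero.comp hsub)).const_mul_atTop hδ)
  refine tendsto_atTop_mono' _ ?_ hlower
  filter_upwards [Ioo_mem_nhdsLT hd.2] with t ht
  linarith [hmono hd ⟨hd.1.trans ht.1, ht.2⟩ ht.1.le]

theorem eq_zero_of_tendsto_of_abs_le_abs_sub_mul {u g : ℝ → ℝ} {a b x₀ L : ℝ} {l : Filter ℝ}
    [l.NeBot] [TendstoIxxClass Icc l l] (hl : l ≤ 𝓝[≠] x₀) (hab : uIcc a b ∈ l)
    (hu : Tendsto u l (𝓝 L)) (hle : ∀ᶠ t in l, |u t| ≤ |t - x₀| * g t)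
    (hg : IntervalIntegrable g volume a b) : L = 0 := by
  by_contra hL
  have hne : ∀ᶠ t in l, t - x₀ ≠ 0 := by
    filter_upwards [hl self_mem_nhdsWithin] with t ht using sub_ne_zero.2 ht
  have hderiv : ∀ t, deriv (fun t => log (t - x₀)) t = (t - x₀)⁻¹ := fun t => by
    rw [deriv_comp_sub_const (f := log), deriv_log]
  refine not_intervalIntegrable_of_tendsto_norm_atTop_of_deriv_isBigO_filter
    (f := fun t => log (t - x₀)) l hab ?_ ?_ ?_ hg
  · filter_upwards [hne] with t ht using (differentiableAt_id.sub_const x₀).log ht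
  · have hsub : Tendsto (fun t => t - x₀) l (𝓝[≠] 0) := by
      refine tendsto_nhdsWithin_iff.2 ⟨?_, hne⟩
      exact ((continuous_id.sub continuous_const).tendsto' x₀ 0 (sub_self x₀)).mono_left
        (hl.trans nhdsWithin_le_nhds)
    exact tendsto_abs_atBot_atTop.comp (tendsto_log_nhdsNE_zero.comp hsub)
  · have hlower : ∀ᶠ t in l, |L| / 2 < |u t| :=
      hu.abs.eventually_const_lt (half_lt_self (abs_pos.2 hL))
    refine Asymptotics.IsBigO.of_bound (2 / |L|) ?_
    filter_upwards [hne, hlower, hle] with t ht hLt hut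
    have ht' : 0 < |t - x₀| := abs_pos.2 ht
    rw [hderiv, norm_inv, Real.norm_eq_abs, Real.norm_eq_abs, inv_le_iff_one_le_mul₀ ht']
    have hgt : |t - x₀| * g t ≤ |t - x₀| * |g t| :=
      mul_le_mul_of_nonneg_left (le_abs_self _) ht'.le
    calc (1 : ℝ) = 2 / |L| * (|L| / 2) := by field_simp
      _ ≤ 2 / |L| * (|t - x₀| * |g t|) := by gcongr; linarith
      _ = 2 / |L| * |g t| * |t - x₀| := by ring

end EndpointLimits

section MonotoneFixedPoint

theorem exists_fixedPoint_of_iInf_mem {ι : Type*} {s : Set ι} {K : Set (ι → ℝ)}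
    {T : (ι → ℝ) → ι → ℝ} {ζ Z : ι → ℝ} (hζ : ∀ z ∈ K, ∀ t ∈ s, ζ t ≤ z t)
    (hinf : ∀ S ⊆ K, S.Nonempty → (fun t => ⨅ z : S, z.1 t) ∈ K) (hT : MapsTo T K K)
    (hmono : ∀ y ∈ K, ∀ z ∈ K, (∀ t ∈ s, y t ≤ z t) → ∀ t ∈ s, T y t ≤ T z t)
    (hZK : Z ∈ K) (hZ : ∀ t ∈ s, T Z t ≤ Z t) :
    ∃ z ∈ K, EqOn (T z) z s := by
  let S : Set (ι → ℝ) := {y | y ∈ K ∧ ∀ t ∈ s, T y t ≤ y t}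
  let z : ι → ℝ := fun t => ⨅ y : S, y.1 t
  have : Nonempty S := ⟨⟨Z, hZK, hZ⟩⟩
  have hz : z ∈ K := hinf S (fun y hy => hy.1) ⟨Z, hZK, hZ⟩
  have z_le : ∀ y ∈ S, ∀ t ∈ s, z t ≤ y t := fun y hy t ht =>
    ciInf_le ⟨ζ t, forall_mem_range.2 fun x : S => hζ x.1 x.2.1 t ht⟩ (⟨y, hy⟩ : S)
  have Tz_le : ∀ t ∈ s, T z t ≤ z t := fun t ht =>
    le_ciInf fun y => (hmono z hz y.1 y.2.1 (z_le y.1 y.2) t ht).trans (y.2.2 t ht)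
  have Tz_mem : T z ∈ S := ⟨hT hz, hmono (T z) (hT hz) z hz Tz_le⟩
  exact ⟨z, hz, fun t ht => (Tz_le t ht).antisymm (z_le (T z) Tz_mem t ht)⟩

/-- The functions on `[0, b]` lying between `ζ` and `Z` whose increments are dominated by those
of `Z`. The second condition is an equicontinuity condition that survives infima, so that the
infimum of a family of members is again continuous. -/
def comparisonClass (b : ℝ) (ζ Z : ℝ → ℝ) : Set (ℝ → ℝ) :=
  {z | (∀ t ∈ Icc 0 b, z t ∈ Icc (ζ t) (Z t)) ∧
    ∀ x ∈ Icc 0 b, ∀ y ∈ Icc 0 b, z x ≤ z y + |Z x - Z y|}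

variable {b : ℝ} {ζ Z : ℝ → ℝ}

theorem iInf_mem_comparisonClass {S : Set (ℝ → ℝ)} (hS : S ⊆ comparisonClass b ζ Z)
    (hne : S.Nonempty) : (fun t => ⨅ z : S, z.1 t) ∈ comparisonClass b ζ Z := by
  have : Nonempty S := hne.to_subtype
  have hbdd : ∀ t ∈ Icc 0 b, BddBelow (range fun z : S => z.1 t) := fun t ht =>
    ⟨ζ t, forall_mem_range.2 fun z : S => ((hS z.2).1 t ht).1⟩
  refine ⟨fun t ht => ⟨le_ciInf fun z => ((hS z.2).1 t ht).1, ?_⟩, fun x hx y hy => ?_⟩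
  · obtain ⟨z, hz⟩ := hne
    exact (ciInf_le (hbdd t ht) (⟨z, hz⟩ : S)).trans ((hS hz).1 t ht).2
  · refine sub_le_iff_le_add.1 (le_ciInf fun z => sub_le_iff_le_add.2 ?_)
    exact (ciInf_le (hbdd x hx) z).trans ((hS z.2).2 x hx y hy)

theorem continuousOn_of_mem_comparisonClass (hZ : ContinuousOn Z (Icc 0 b)) {z : ℝ → ℝ}
    (hz : z ∈ comparisonClass b ζ Z) : ContinuousOn z (Icc 0 b) := by
  intro y hy
  have hdist : ∀ x ∈ Icc 0 b, dist (z x) (z y) ≤ dist (Z x) (Z y) := fun x hx => by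
    have hxy := hz.2 x hx y hy
    have hyx := hz.2 y hy x hx
    rw [abs_sub_comm] at hyx
    rw [Real.dist_eq, Real.dist_eq, abs_sub_le_iff]
    constructor <;> linarith
  rw [ContinuousWithinAt, tendsto_iff_dist_tendsto_zero]
  exact squeeze_zero' (.of_forall fun _ => dist_nonneg)
    (eventually_nhdsWithin_of_forall hdist) (tendsto_iff_dist_tendsto_zero.1 (hZ y hy))

theorem mem_comparisonClass_of_antitoneOn {z : ℝ → ℝ} (hz : ∀ t ∈ Icc 0 b, z t ∈ Icc (ζ t) (Z t))
    (hanti : AntitoneOn z (Icc 0 b)) (hsub : AntitoneOn (fun t => Z t - z t) (Icc 0 b)) :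
    z ∈ comparisonClass b ζ Z := by
  refine ⟨hz, fun x hx y hy => ?_⟩
  rcases le_total x y with hxy | hyx
  · linarith [hsub hx hy hxy, le_abs_self (Z x - Z y)]
  · linarith [hanti hy hx hyx, abs_nonneg (Z x - Z y)]

theorem upper_mem_comparisonClass (h : ∀ t ∈ Icc 0 b, ζ t ≤ Z t) : Z ∈ comparisonClass b ζ Z :=
  ⟨fun t ht => ⟨h t ht, le_rfl⟩, fun x _ y _ => by linarith [le_abs_self (Z x - Z y)]⟩

/-- The value at `t` of `-z'` prescribed by the equation `(a z')' + F(t, z) = 0` with zero flux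
`a z'` at the origin. -/
def fluxQuotient (a : ℝ → ℝ) (F : ℝ → ℝ → ℝ) (z : ℝ → ℝ) (t : ℝ) : ℝ :=
  (∫ s in 0..t, F s (z s)) / a t

/-- The integral operator whose fixed points solve `(a z')' + F(t, z) = 0` on `(0, b)` with zero
flux at `0` and zero value at `b`. -/
def greenMap (b : ℝ) (a : ℝ → ℝ) (F : ℝ → ℝ → ℝ) (z : ℝ → ℝ) (θ : ℝ) : ℝ :=
  ∫ t in θ..b, fluxQuotient a F z t

/-- Ordered sub- and supersolutions `ζ ≤ Z` of the problem solved by the fixed points of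
`greenMap b a F`, for a source `F` that is nonnegative and increasing between them. The
differential inequalities are stated in once-integrated form. -/
structure OrderedBarriers (b : ℝ) (a : ℝ → ℝ) (F : ℝ → ℝ → ℝ) (ζ Z ζ' Z' : ℝ → ℝ) : Prop where
  coeff_continuousOn : ContinuousOn a (Ioo 0 b)
  coeff_pos : ∀ t ∈ Ioo 0 b, 0 < a t
  source_continuousOn : ContinuousOn (Function.uncurry F) (Ico 0 b ×ˢ univ)
  source_nonneg : ∀ s ∈ Ico 0 b, 0 ≤ F s (ζ s)
  source_monotoneOn : ∀ s ∈ Ico 0 b, MonotoneOn (F s) (Icc (ζ s) (Z s))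
  lower_le_upper : ∀ t ∈ Icc 0 b, ζ t ≤ Z t
  lower_continuousOn : ContinuousOn ζ (Icc 0 b)
  upper_continuousOn : ContinuousOn Z (Icc 0 b)
  lower_right : ζ b = 0
  upper_right : Z b = 0
  lower_hasDerivAt : ∀ t ∈ Ioo 0 b, HasDerivAt ζ (ζ' t) t
  upper_hasDerivAt : ∀ t ∈ Ioo 0 b, HasDerivAt Z (Z' t) t
  neg_deriv_lower_le : ∀ t ∈ Ioo 0 b, -ζ' t ≤ fluxQuotient a F ζ t
  le_neg_deriv_upper : ∀ t ∈ Ioo 0 b, fluxQuotient a F Z t ≤ -Z' t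

namespace OrderedBarriers

variable {a : ℝ → ℝ} {F : ℝ → ℝ → ℝ} {ζ' Z' y z : ℝ → ℝ} {t : ℝ}

theorem source_comp_continuousOn (h : OrderedBarriers b a F ζ Z ζ' Z')
    (hz : ContinuousOn z (Icc 0 b)) : ContinuousOn (fun s => F s (z s)) (Ico 0 b) :=
  h.source_continuousOn.comp (f := fun s => (s, z s))
    (continuousOn_id.prodMk (hz.mono Ico_subset_Icc_self)) fun _ hs => ⟨hs, trivial⟩

theorem fluxQuotient_mono (h : OrderedBarriers b a F ζ Z ζ' Z') (hy : ContinuousOn y (Icc 0 b))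
    (hz : ContinuousOn z (Icc 0 b)) (hζy : ∀ s ∈ Icc 0 b, ζ s ≤ y s)
    (hyz : ∀ s ∈ Icc 0 b, y s ≤ z s) (hzZ : ∀ s ∈ Icc 0 b, z s ≤ Z s) (ht : t ∈ Ioo 0 b) :
    fluxQuotient a F y t ≤ fluxQuotient a F z t := by
  have ht' := Ioo_subset_Ico_self ht
  refine div_le_div_of_nonneg_right (intervalIntegral.integral_mono_on ht.1.le
    (intervalIntegrable_of_continuousOn_Ico (h.source_comp_continuousOn hy) ht')
    (intervalIntegrable_of_continuousOn_Ico (h.source_comp_continuousOn hz) ht') fun s hs => ?_)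
    (h.coeff_pos t ht).le
  have hs' : s ∈ Ico 0 b := ⟨hs.1, hs.2.trans_lt ht.2⟩
  have hs'' := Ico_subset_Icc_self hs'
  exact h.source_monotoneOn s hs' ⟨hζy s hs'', (hyz s hs'').trans (hzZ s hs'')⟩
    ⟨(hζy s hs'').trans (hyz s hs''), hzZ s hs''⟩ (hyz s hs'')

variable (h : OrderedBarriers b a F ζ Z ζ' Z') (hz : z ∈ comparisonClass b ζ Z)
include h hz

theorem continuousOn_of_mem : ContinuousOn z (Icc 0 b) :=
  continuousOn_of_mem_comparisonClass h.upper_continuousOn hz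

theorem neg_deriv_lower_le_fluxQuotient (ht : t ∈ Ioo 0 b) : -ζ' t ≤ fluxQuotient a F z t :=
  (h.neg_deriv_lower_le t ht).trans <|
    h.fluxQuotient_mono h.lower_continuousOn (h.continuousOn_of_mem hz) (fun _ _ => le_rfl)
      (fun s hs => (hz.1 s hs).1) (fun s hs => (hz.1 s hs).2) ht

theorem fluxQuotient_le_neg_deriv_upper (ht : t ∈ Ioo 0 b) : fluxQuotient a F z t ≤ -Z' t :=
  le_trans (h.fluxQuotient_mono (h.continuousOn_of_mem hz) h.upper_continuousOn
      (fun s hs => (hz.1 s hs).1) (fun s hs => (hz.1 s hs).2) (fun _ _ => le_rfl) ht)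
    (h.le_neg_deriv_upper t ht)

theorem fluxQuotient_nonneg (ht : t ∈ Ioo 0 b) : 0 ≤ fluxQuotient a F z t := by
  refine div_nonneg (intervalIntegral.integral_nonneg ht.1.le fun s hs => ?_) (h.coeff_pos t ht).le
  have hs' : s ∈ Ico 0 b := ⟨hs.1, hs.2.trans_lt ht.2⟩
  have hzs := hz.1 s (Ico_subset_Icc_self hs')
  exact (h.source_nonneg s hs').trans
    (h.source_monotoneOn s hs' ⟨le_rfl, hzs.1.trans hzs.2⟩ hzs hzs.1)

theorem fluxQuotient_continuousOn : ContinuousOn (fluxQuotient a F z) (Ioo 0 b) :=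
  ContinuousOn.div (fun _ ht => (hasDerivAt_integral_of_continuousOn_Ico
      (h.source_comp_continuousOn (h.continuousOn_of_mem hz)) ht).continuousAt.continuousWithinAt)
    h.coeff_continuousOn fun t ht => (h.coeff_pos t ht).ne'

theorem fluxQuotient_intervalIntegrable (hb : 0 < b) :
    IntervalIntegrable (fluxQuotient a F z) volume 0 b := by
  have hZ' : IntegrableOn (fun t => -Z' t) (Ioc 0 b) :=
    intervalIntegral.integrableOn_deriv_of_nonneg h.upper_continuousOn.neg
      (fun t ht => (h.upper_hasDerivAt t ht).neg) fun t ht =>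
        (h.fluxQuotient_nonneg hz ht).trans (h.fluxQuotient_le_neg_deriv_upper hz ht)
  rw [intervalIntegrable_iff_integrableOn_Ioc_of_le hb.le, integrableOn_Ioc_iff_integrableOn_Ioo]
  refine (hZ'.mono_set Ioo_subset_Ioc_self).mono'
    ((h.fluxQuotient_continuousOn hz).aestronglyMeasurable measurableSet_Ioo) ?_
  filter_upwards [ae_restrict_mem measurableSet_Ioo] with t ht
  rw [Real.norm_of_nonneg (h.fluxQuotient_nonneg hz ht)]
  exact h.fluxQuotient_le_neg_deriv_upper hz ht

theorem greenMap_continuousOn (hb : 0 < b) : ContinuousOn (greenMap b a F z) (Icc 0 b) := by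
  have hint := h.fluxQuotient_intervalIntegrable hz hb
  rw [intervalIntegrable_iff_integrableOn_Ioc_of_le hb.le, ← integrableOn_Icc_iff_integrableOn_Ioc,
    ← uIcc_of_le hb.le] at hint
  rw [← uIcc_of_le hb.le]
  exact intervalIntegral.continuousOn_primitive_interval_left hint

theorem greenMap_hasDerivAt (ht : t ∈ Ioo 0 b) :
    HasDerivAt (greenMap b a F z) (-fluxQuotient a F z t) t := by
  have hcont := h.fluxQuotient_continuousOn hz
  have hint : IntervalIntegrable (fluxQuotient a F z) volume t b :=
    (h.fluxQuotient_intervalIntegrable hz (ht.1.trans ht.2)).mono_set <| by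
      rw [uIcc_of_le ht.2.le, uIcc_of_le (ht.1.trans ht.2).le]
      exact Icc_subset_Icc_left ht.1.le
  exact intervalIntegral.integral_hasDerivAt_left hint
    (hcont.stronglyMeasurableAtFilter isOpen_Ioo t ht) (hcont.continuousAt (Ioo_mem_nhds ht.1 ht.2))

theorem greenMap_antitoneOn (hb : 0 < b) : AntitoneOn (greenMap b a F z) (Icc 0 b) := by
  refine antitoneOn_of_hasDerivWithinAt_nonpos (convex_Icc 0 b) (h.greenMap_continuousOn hz hb)
    (f' := fun t => -fluxQuotient a F z t) ?_ ?_ <;> rw [interior_Icc] <;> intro t ht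
  · exact (h.greenMap_hasDerivAt hz ht).hasDerivWithinAt
  · exact neg_nonpos.2 (h.fluxQuotient_nonneg hz ht)

theorem upper_sub_greenMap_antitoneOn (hb : 0 < b) :
    AntitoneOn (fun t => Z t - greenMap b a F z t) (Icc 0 b) := by
  refine antitoneOn_of_hasDerivWithinAt_nonpos (convex_Icc 0 b)
    (h.upper_continuousOn.sub (h.greenMap_continuousOn hz hb))
    (f' := fun t => Z' t - -fluxQuotient a F z t) ?_ ?_ <;> rw [interior_Icc] <;> intro t ht
  · exact ((h.upper_hasDerivAt t ht).sub (h.greenMap_hasDerivAt hz ht)).hasDerivWithinAt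
  · linarith [h.fluxQuotient_le_neg_deriv_upper hz ht]

theorem greenMap_sub_lower_antitoneOn (hb : 0 < b) :
    AntitoneOn (fun t => greenMap b a F z t - ζ t) (Icc 0 b) := by
  refine antitoneOn_of_hasDerivWithinAt_nonpos (convex_Icc 0 b)
    ((h.greenMap_continuousOn hz hb).sub h.lower_continuousOn)
    (f' := fun t => -fluxQuotient a F z t - ζ' t) ?_ ?_ <;> rw [interior_Icc] <;> intro t ht
  · exact ((h.greenMap_hasDerivAt hz ht).sub (h.lower_hasDerivAt t ht)).hasDerivWithinAt
  · linarith [h.neg_deriv_lower_le_fluxQuotient hz ht]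

theorem greenMap_mem_comparisonClass (hb : 0 < b) : greenMap b a F z ∈ comparisonClass b ζ Z := by
  have hright : greenMap b a F z b = 0 := intervalIntegral.integral_same
  refine mem_comparisonClass_of_antitoneOn (fun t ht => ?_) (h.greenMap_antitoneOn hz hb)
    (h.upper_sub_greenMap_antitoneOn hz hb)
  have hlower := h.greenMap_sub_lower_antitoneOn hz hb ht (right_mem_Icc.2 hb.le) ht.2
  have hupper := h.upper_sub_greenMap_antitoneOn hz hb ht (right_mem_Icc.2 hb.le) ht.2
  simp only [hright, h.lower_right, h.upper_right, sub_zero] at hlower hupper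
  exact ⟨sub_nonneg.1 hlower, sub_nonneg.1 hupper⟩

omit hz in
theorem greenMap_mono (hb : 0 < b) (hy : y ∈ comparisonClass b ζ Z)
    (hz : z ∈ comparisonClass b ζ Z) (hyz : ∀ s ∈ Icc 0 b, y s ≤ z s) (ht : t ∈ Icc 0 b) :
    greenMap b a F y t ≤ greenMap b a F z t := by
  have hsub : uIcc t b ⊆ uIcc 0 b := by
    rw [uIcc_of_le ht.2, uIcc_of_le hb.le]
    exact Icc_subset_Icc_left ht.1
  refine intervalIntegral.integral_mono_on_of_le_Ioo ht.2
    ((h.fluxQuotient_intervalIntegrable hy hb).mono_set hsub)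
    ((h.fluxQuotient_intervalIntegrable hz hb).mono_set hsub) fun s hs => ?_
  exact h.fluxQuotient_mono (h.continuousOn_of_mem hy) (h.continuousOn_of_mem hz)
    (fun s hs => (hy.1 s hs).1) hyz (fun s hs => (hz.1 s hs).2) ⟨ht.1.trans_lt hs.1, hs.2⟩

omit hz in
theorem exists_hasDerivAt_neg_fluxQuotient (hb : 0 < b) :
    ∃ z, ContinuousOn z (Icc 0 b) ∧ (∀ t ∈ Icc 0 b, z t ∈ Icc (ζ t) (Z t)) ∧
      ∀ t ∈ Ioo 0 b, HasDerivAt z (-fluxQuotient a F z t) t := by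
  have hZ : Z ∈ comparisonClass b ζ Z := upper_mem_comparisonClass h.lower_le_upper
  obtain ⟨z, hz, hfix⟩ := exists_fixedPoint_of_iInf_mem (s := Icc 0 b) (K := comparisonClass b ζ Z)
    (T := greenMap b a F) (fun z hz t ht => (hz.1 t ht).1) (fun _ => iInf_mem_comparisonClass)
    (fun z hz => h.greenMap_mem_comparisonClass hz hb)
    (fun y hy z hz hyz t ht => h.greenMap_mono hb hy hz hyz ht)
    hZ (fun t ht => ((h.greenMap_mem_comparisonClass hZ hb).1 t ht).2)
  refine ⟨z, h.continuousOn_of_mem hz, hz.1, fun t ht => ?_⟩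
  refine (h.greenMap_hasDerivAt hz ht).congr_of_eventuallyEq ?_
  filter_upwards [Icc_mem_nhds ht.1 ht.2] with s hs using (hfix hs).symm

end OrderedBarriers

end MonotoneFixedPoint

section DoobTransform

/-- `V` is the flux `p v'` of `v` on `(0, b)`, it has derivative `V'` and vanishes at the origin. -/
structure HasFlux (b : ℝ) (p v V V' : ℝ → ℝ) : Prop where
  hasDerivAt : ∀ t ∈ Ioo 0 b, HasDerivAt v (V t / p t) t
  hasDerivAt_flux : ∀ t ∈ Ioo 0 b, HasDerivAt V (V' t) t
  tendsto_flux : Tendsto V (𝓝[>] 0) (𝓝 0)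

theorem HasFlux.neg {b : ℝ} {p v V V' : ℝ → ℝ} (h : HasFlux b p v V V') :
    HasFlux b p (fun t => -v t) (fun t => -V t) (fun t => -V' t) where
  hasDerivAt t ht := (h.hasDerivAt t ht).neg.congr_deriv (neg_div _ _).symm
  hasDerivAt_flux t ht := (h.hasDerivAt_flux t ht).neg
  tendsto_flux := by simpa using h.tendsto_flux.neg

theorem HasFlux.congr {b : ℝ} {p v V V' W' : ℝ → ℝ} (h : HasFlux b p v V V')
    (heq : ∀ t ∈ Ioo 0 b, V' t = W' t) : HasFlux b p v V W' where
  __ := h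
  hasDerivAt_flux t ht := (h.hasDerivAt_flux t ht).congr_deriv (heq t ht)

theorem hasFlux_const (b x : ℝ) (p : ℝ → ℝ) : HasFlux b p (fun _ => x) 0 0 where
  hasDerivAt t _ := by simpa using hasDerivAt_const t x
  hasDerivAt_flux t _ := hasDerivAt_const t 0
  tendsto_flux := tendsto_const_nhds

/-- A positive function `φ` vanishing at `b` such that `φ⁻¹` has flux `Φ` with `Φ' = σ`. Passing
from `v` to `φ v` (Doob's transform) adds the linear term `σ` to the source of an equation
`(p v')' + p f(t, v) = 0` and imposes a zero boundary value at `b`. -/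
structure DoobWeight (b : ℝ) (p φ Φ σ : ℝ → ℝ) : Prop where
  coeff_continuousOn : ContinuousOn p (Ico 0 b)
  coeff_pos : ∀ t ∈ Ioo 0 b, 0 < p t
  continuousOn : ContinuousOn φ (Icc 0 b)
  pos : ∀ t ∈ Ico 0 b, 0 < φ t
  right_eq_zero : φ b = 0
  flux_inv : HasFlux b p (fun t => (φ t)⁻¹) Φ σ
  source_continuousOn : ContinuousOn σ (Ico 0 b)

/-- The source term of the equation for `z = φ w` when `(p w')' + p f(t, w) = 0`. -/
def doobSource (p φ σ : ℝ → ℝ) (f : ℝ → ℝ → ℝ) (s x : ℝ) : ℝ :=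
  σ s * (x / φ s) + p s / φ s * f s (x / φ s)

namespace DoobWeight

variable {b : ℝ} {p φ Φ σ : ℝ → ℝ} {f : ℝ → ℝ → ℝ} {v V V' : ℝ → ℝ} {t : ℝ}
  (hφ : DoobWeight b p φ Φ σ)
include hφ

theorem hasDerivAt (ht : t ∈ Ioo 0 b) : HasDerivAt φ (-(φ t ^ 2 * (Φ t / p t))) t := by
  have hinv := (hφ.flux_inv.hasDerivAt t ht).inv (inv_ne_zero (hφ.pos t ⟨ht.1.le, ht.2⟩).ne')
  simp only [Pi.inv_def, inv_inv] at hinv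
  exact hinv.congr_deriv (by field_simp)

theorem doobSource_continuousOn (hf : ContinuousOn (Function.uncurry f) (Ico 0 b ×ˢ univ)) :
    ContinuousOn (Function.uncurry (doobSource p φ σ f)) (Ico 0 b ×ˢ univ) := by
  have hfst : MapsTo Prod.fst (Ico 0 b ×ˢ (univ : Set ℝ)) (Ico 0 b) := fun _ hx => hx.1
  have hφc : ContinuousOn (fun x : ℝ × ℝ => φ x.1) (Ico 0 b ×ˢ univ) :=
    (hφ.continuousOn.mono Ico_subset_Icc_self).comp continuousOn_fst hfst
  have hφ0 : ∀ x ∈ Ico 0 b ×ˢ (univ : Set ℝ), φ x.1 ≠ 0 := fun x hx => (hφ.pos x.1 hx.1).ne'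
  have hquot : ContinuousOn (fun x : ℝ × ℝ => x.2 / φ x.1) (Ico 0 b ×ˢ univ) :=
    continuousOn_snd.div hφc hφ0
  have hfc : ContinuousOn (fun x : ℝ × ℝ => f x.1 (x.2 / φ x.1)) (Ico 0 b ×ˢ univ) :=
    hf.comp (continuousOn_fst.prodMk hquot) fun _ hx => ⟨hx.1, trivial⟩
  exact ((hφ.source_continuousOn.comp continuousOn_fst hfst).mul hquot).add
    (((hφ.coeff_continuousOn.comp continuousOn_fst hfst).div hφc hφ0).mul hfc)

theorem doobSource_comp_continuousOn
    (hf : ContinuousOn (Function.uncurry f) (Ico 0 b ×ˢ univ)) {z : ℝ → ℝ}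
    (hz : ContinuousOn z (Icc 0 b)) :
    ContinuousOn (fun s => doobSource p φ σ f s (z s)) (Ico 0 b) :=
  (hφ.doobSource_continuousOn hf).comp (f := fun s => (s, z s))
    (continuousOn_id.prodMk (hz.mono Ico_subset_Icc_self)) fun _ hs => ⟨hs, trivial⟩

theorem hasDerivAt_mul (hv : HasFlux b p v V V') (ht : t ∈ Ioo 0 b) :
    HasDerivAt (fun t => v t * φ t) (-((v t * Φ t - V t / φ t) / (p t / φ t ^ 2))) t := by
  have hp := (hφ.coeff_pos t ht).ne'
  have hφt := (hφ.pos t ⟨ht.1.le, ht.2⟩).ne'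
  refine ((hv.hasDerivAt t ht).mul (hφ.hasDerivAt ht)).congr_deriv ?_
  field_simp
  ring

theorem hasDerivAt_wronskian (hv : HasFlux b p v V V') (ht : t ∈ Ioo 0 b) :
    HasDerivAt (fun t => v t * Φ t - V t / φ t) (σ t * v t - V' t / φ t) t := by
  have hderiv := ((hv.hasDerivAt t ht).mul (hφ.flux_inv.hasDerivAt_flux t ht)).sub
    ((hv.hasDerivAt_flux t ht).mul (hφ.flux_inv.hasDerivAt t ht))
  simp only [← div_eq_mul_inv] at hderiv
  refine hderiv.congr_deriv ?_
  ring

theorem tendsto_wronskian (hb : 0 < b) (hv : HasFlux b p v V V') (hvc : ContinuousOn v (Icc 0 b)) :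
    Tendsto (fun t => v t * Φ t - V t / φ t) (𝓝[>] 0) (𝓝 0) := by
  have hlim := ((tendsto_nhdsGT_of_continuousOn_Icc hb hvc).mul hφ.flux_inv.tendsto_flux).sub
    (hv.tendsto_flux.div (tendsto_nhdsGT_of_continuousOn_Icc hb hφ.continuousOn)
      (hφ.pos 0 ⟨le_rfl, hb⟩).ne')
  simpa using hlim

theorem hasDerivAt_integral_doobSource_sub_wronskian
    (hf : ContinuousOn (Function.uncurry f) (Ico 0 b ×ˢ univ)) (hv : HasFlux b p v V V')
    (hvc : ContinuousOn v (Icc 0 b)) (ht : t ∈ Ioo 0 b) :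
    HasDerivAt (fun t => (∫ s in 0..t, doobSource p φ σ f s (v s * φ s)) -
      (v t * Φ t - V t / φ t)) ((p t * f t (v t) + V' t) / φ t) t := by
  have hφt := (hφ.pos t ⟨ht.1.le, ht.2⟩).ne'
  refine ((hasDerivAt_integral_of_continuousOn_Ico (hφ.doobSource_comp_continuousOn hf
    (hvc.mul hφ.continuousOn)) ht).sub (hφ.hasDerivAt_wronskian hv ht)).congr_deriv ?_
  simp only [doobSource, Pi.mul_apply, mul_div_cancel_right₀ _ hφt]
  ring

theorem tendsto_integral_doobSource_sub_wronskian (hb : 0 < b)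
    (hf : ContinuousOn (Function.uncurry f) (Ico 0 b ×ˢ univ)) (hv : HasFlux b p v V V')
    (hvc : ContinuousOn v (Icc 0 b)) :
    Tendsto (fun t => (∫ s in 0..t, doobSource p φ σ f s (v s * φ s)) -
      (v t * Φ t - V t / φ t)) (𝓝[>] 0) (𝓝 0) := by
  simpa using (tendsto_integral_nhdsGT_zero hb (hφ.doobSource_comp_continuousOn hf
    (hvc.mul hφ.continuousOn))).sub (hφ.tendsto_wronskian hb hv hvc)

theorem wronskian_div_le_fluxQuotient (hb : 0 < b)
    (hf : ContinuousOn (Function.uncurry f) (Ico 0 b ×ˢ univ)) (hv : HasFlux b p v V V')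
    (hvc : ContinuousOn v (Icc 0 b)) (hsub : ∀ t ∈ Ioo 0 b, -V' t ≤ p t * f t (v t))
    (ht : t ∈ Ioo 0 b) :
    - -((v t * Φ t - V t / φ t) / (p t / φ t ^ 2)) ≤
      fluxQuotient (fun t => p t / φ t ^ 2) (doobSource p φ σ f) (fun t => v t * φ t) t := by
  rw [neg_neg]
  refine div_le_div_of_nonneg_right (sub_nonneg.1 ?_)
    (div_nonneg (hφ.coeff_pos t ht).le (sq_nonneg _))
  refine nonneg_of_hasDerivAt_nonneg_of_tendsto_zero
    (fun s hs => hφ.hasDerivAt_integral_doobSource_sub_wronskian hf hv hvc hs) (fun s hs => ?_)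
    (hφ.tendsto_integral_doobSource_sub_wronskian hb hf hv hvc) ht
  exact div_nonneg (by linarith [hsub s hs]) (hφ.pos s ⟨hs.1.le, hs.2⟩).le

theorem fluxQuotient_le_wronskian_div (hb : 0 < b)
    (hf : ContinuousOn (Function.uncurry f) (Ico 0 b ×ˢ univ)) (hv : HasFlux b p v V V')
    (hvc : ContinuousOn v (Icc 0 b)) (hsup : ∀ t ∈ Ioo 0 b, p t * f t (v t) ≤ -V' t)
    (ht : t ∈ Ioo 0 b) :
    fluxQuotient (fun t => p t / φ t ^ 2) (doobSource p φ σ f) (fun t => v t * φ t) t ≤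
      - -((v t * Φ t - V t / φ t) / (p t / φ t ^ 2)) := by
  rw [neg_neg]
  refine div_le_div_of_nonneg_right (sub_nonneg.1 ?_)
    (div_nonneg (hφ.coeff_pos t ht).le (sq_nonneg _))
  have hlim := (hφ.tendsto_integral_doobSource_sub_wronskian hb hf hv hvc).neg
  rw [neg_zero] at hlim
  simpa only [Pi.neg_apply, neg_sub] using nonneg_of_hasDerivAt_nonneg_of_tendsto_zero
    (fun s hs => (hφ.hasDerivAt_integral_doobSource_sub_wronskian hf hv hvc hs).neg)
    (fun s hs => neg_nonneg.2 (div_nonpos_of_nonpos_of_nonneg (by linarith [hsup s hs])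
      (hφ.pos s ⟨hs.1.le, hs.2⟩).le)) hlim ht

theorem orderedBarriers (hb : 0 < b) (hf : ContinuousOn (Function.uncurry f) (Ico 0 b ×ˢ univ))
    {v₁ V₁ V₁' v₂ V₂ V₂' : ℝ → ℝ} (h₁ : HasFlux b p v₁ V₁ V₁') (h₂ : HasFlux b p v₂ V₂ V₂')
    (hc₁ : ContinuousOn v₁ (Icc 0 b)) (hc₂ : ContinuousOn v₂ (Icc 0 b))
    (hle : ∀ t ∈ Icc 0 b, v₁ t ≤ v₂ t)
    (hsub : ∀ t ∈ Ioo 0 b, -V₁' t ≤ p t * f t (v₁ t))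
    (hsup : ∀ t ∈ Ioo 0 b, p t * f t (v₂ t) ≤ -V₂' t)
    (hnonneg : ∀ s ∈ Ico 0 b, 0 ≤ σ s * v₁ s + p s / φ s * f s (v₁ s))
    (hmono : ∀ s ∈ Ico 0 b,
      MonotoneOn (fun x => σ s * x + p s / φ s * f s x) (Icc (v₁ s) (v₂ s))) :
    OrderedBarriers b (fun t => p t / φ t ^ 2) (doobSource p φ σ f)
      (fun t => v₁ t * φ t) (fun t => v₂ t * φ t)
      (fun t => -((v₁ t * Φ t - V₁ t / φ t) / (p t / φ t ^ 2)))
      (fun t => -((v₂ t * Φ t - V₂ t / φ t) / (p t / φ t ^ 2))) where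
  coeff_continuousOn := (hφ.coeff_continuousOn.mono Ioo_subset_Ico_self).div
    ((hφ.continuousOn.mono Ioo_subset_Icc_self).pow 2)
    fun t ht => pow_ne_zero 2 (hφ.pos t ⟨ht.1.le, ht.2⟩).ne'
  coeff_pos t ht := div_pos (hφ.coeff_pos t ht) (pow_pos (hφ.pos t ⟨ht.1.le, ht.2⟩) 2)
  source_continuousOn := hφ.doobSource_continuousOn hf
  source_nonneg s hs := by
    simpa [doobSource, (hφ.pos s hs).ne'] using hnonneg s hs
  source_monotoneOn s hs x hx y hy hxy := by
    have hφs := hφ.pos s hs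
    have hmem : ∀ u ∈ Icc (v₁ s * φ s) (v₂ s * φ s), u / φ s ∈ Icc (v₁ s) (v₂ s) := fun u hu =>
      ⟨(le_div_iff₀ hφs).2 hu.1, (div_le_iff₀ hφs).2 hu.2⟩
    exact hmono s hs (hmem x hx) (hmem y hy) (div_le_div_of_nonneg_right hxy hφs.le)
  lower_le_upper t ht := by
    have hφt : 0 ≤ φ t := ht.2.eq_or_lt.elim (fun h => h ▸ hφ.right_eq_zero.ge)
      fun h => (hφ.pos t ⟨ht.1, h⟩).le
    exact mul_le_mul_of_nonneg_right (hle t ht) hφt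
  lower_continuousOn := hc₁.mul hφ.continuousOn
  upper_continuousOn := hc₂.mul hφ.continuousOn
  lower_right := by simp [hφ.right_eq_zero]
  upper_right := by simp [hφ.right_eq_zero]
  lower_hasDerivAt _ ht := hφ.hasDerivAt_mul h₁ ht
  upper_hasDerivAt _ ht := hφ.hasDerivAt_mul h₂ ht
  neg_deriv_lower_le t ht := hφ.wronskian_div_le_fluxQuotient hb hf h₁ hc₁ hsub ht
  le_neg_deriv_upper t ht := hφ.fluxQuotient_le_wronskian_div hb hf h₂ hc₂ hsup ht

theorem hasFlux_div (hb : 0 < b) (hf : ContinuousOn (Function.uncurry f) (Ico 0 b ×ˢ univ))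
    {z : ℝ → ℝ} (hz : ContinuousOn z (Icc 0 b)) (hderiv : ∀ t ∈ Ioo 0 b,
      HasDerivAt z (-fluxQuotient (fun t => p t / φ t ^ 2) (doobSource p φ σ f) z t) t) :
    HasFlux b p (fun t => z t / φ t)
      (fun t => z t * Φ t - φ t * ∫ s in 0..t, doobSource p φ σ f s (z s))
      (fun t => -(p t * f t (z t / φ t))) where
  hasDerivAt t ht := by
    have hp := (hφ.coeff_pos t ht).ne'
    have hquot := (hderiv t ht).mul (hφ.flux_inv.hasDerivAt t ht)
    simp only [← div_eq_mul_inv] at hquot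
    refine hquot.congr_deriv ?_
    rw [fluxQuotient]
    field_simp
    ring
  hasDerivAt_flux t ht := by
    have hp := (hφ.coeff_pos t ht).ne'
    have hφt := (hφ.pos t ⟨ht.1.le, ht.2⟩).ne'
    refine (((hderiv t ht).mul (hφ.flux_inv.hasDerivAt_flux t ht)).sub
      ((hφ.hasDerivAt ht).mul (hasDerivAt_integral_of_continuousOn_Ico
        (hφ.doobSource_comp_continuousOn hf hz) ht))).congr_deriv ?_
    rw [fluxQuotient, doobSource]
    field_simp
    ring
  tendsto_flux := by
    have hlim := ((tendsto_nhdsGT_of_continuousOn_Icc hb hz).mul hφ.flux_inv.tendsto_flux).sub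
      ((tendsto_nhdsGT_of_continuousOn_Icc hb hφ.continuousOn).mul
        (tendsto_integral_nhdsGT_zero hb (hφ.doobSource_comp_continuousOn hf hz)))
    simpa using hlim

theorem exists_hasFlux_between (hb : 0 < b)
    (hf : ContinuousOn (Function.uncurry f) (Ico 0 b ×ˢ univ))
    {v₁ V₁ V₁' v₂ V₂ V₂' : ℝ → ℝ} (h₁ : HasFlux b p v₁ V₁ V₁') (h₂ : HasFlux b p v₂ V₂ V₂')
    (hc₁ : ContinuousOn v₁ (Icc 0 b)) (hc₂ : ContinuousOn v₂ (Icc 0 b))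
    (hle : ∀ t ∈ Icc 0 b, v₁ t ≤ v₂ t)
    (hsub : ∀ t ∈ Ioo 0 b, -V₁' t ≤ p t * f t (v₁ t))
    (hsup : ∀ t ∈ Ioo 0 b, p t * f t (v₂ t) ≤ -V₂' t)
    (hnonneg : ∀ s ∈ Ico 0 b, 0 ≤ σ s * v₁ s + p s / φ s * f s (v₁ s))
    (hmono : ∀ s ∈ Ico 0 b,
      MonotoneOn (fun x => σ s * x + p s / φ s * f s x) (Icc (v₁ s) (v₂ s))) :
    ∃ w P, (∀ t ∈ Ioo 0 b, w t ∈ Icc (v₁ t) (v₂ t)) ∧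
      HasFlux b p w P (fun t => -(p t * f t (w t))) := by
  obtain ⟨z, hzc, hz, hderiv⟩ :=
    (hφ.orderedBarriers hb hf h₁ h₂ hc₁ hc₂ hle hsub hsup hnonneg
      hmono).exists_hasDerivAt_neg_fluxQuotient hb
  refine ⟨_, _, fun t ht => ?_, hφ.hasFlux_div hb hf hzc hderiv⟩
  have hφt := hφ.pos t ⟨ht.1.le, ht.2⟩
  have hzt := hz t (Ioo_subset_Icc_self ht)
  exact ⟨(le_div_iff₀ hφt).2 hzt.1, (div_le_iff₀ hφt).2 hzt.2⟩

end DoobWeight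

end DoobTransform

section FluxBound

/-- A positive weight on `(0, b)` that is comparable, up to the constant `K`, with a function
increasing on the left half and decreasing on the right half of the interval, and that vanishes
at `b` at least linearly. The last condition makes `1 / p` non-integrable at `b`. -/
structure UnimodalWeight (b K : ℝ) (p : ℝ → ℝ) : Prop where
  continuousOn : ContinuousOn p (Ioo 0 b)
  pos : ∀ t ∈ Ioo 0 b, 0 < p t
  le_of_le_half : ∀ s t, 0 < s → s ≤ t → t ≤ b / 2 → p s ≤ K * p t
  le_of_half_le : ∀ s t, b / 2 ≤ t → t ≤ s → s < b → p s ≤ K * p t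
  le_mul_sub : ∀ t ∈ Ioo 0 b, p t ≤ K * (b - t)

namespace UnimodalWeight

variable {b K D M L : ℝ} {p w P P' : ℝ → ℝ} (hp : UnimodalWeight b K p)
include hp

theorem le_mul_mid {t : ℝ} (ht : t ∈ Ioo 0 b) : p t ≤ K * p (b / 2) :=
  (le_total t (b / 2)).elim (fun h => hp.le_of_le_half t _ ht.1 h le_rfl)
    fun h => hp.le_of_half_le t _ le_rfl h ht.2

theorem integrableOn : IntegrableOn p (Ioo 0 b) := by
  refine (integrableOn_const measure_Ioo_lt_top.ne (C := K * p (b / 2))).mono'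
    (hp.continuousOn.aestronglyMeasurable measurableSet_Ioo) ?_
  filter_upwards [ae_restrict_mem measurableSet_Ioo] with t ht
  rw [Real.norm_of_nonneg (hp.pos t ht).le]
  exact hp.le_mul_mid ht

variable (hb : 0 < b)
include hb

theorem const_pos : 0 < K := by
  have hmid : 0 < p (b / 2) := hp.pos _ ⟨half_pos hb, half_lt_self hb⟩
  have hle := hp.le_of_le_half (b / 2) (b / 2) (half_pos hb) le_rfl le_rfl
  exact pos_of_mul_pos_left (hmid.trans_le hle) hmid.le

theorem flux_limit_nonpos (hw : HasFlux b p w P P') (hM : ∀ t ∈ Ioo 0 b, w t ≤ M)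
    (hL : Tendsto P (𝓝[<] b) (𝓝 L)) : L ≤ 0 := by
  by_contra! hLpos
  have hK := hp.const_pos hb
  obtain ⟨c, hcb, hc⟩ := mem_nhdsLT_iff_exists_Ioo_subset.1
    ((hL.eventually_const_lt (half_lt_self hLpos)).and (Ioo_mem_nhdsLT hb))
  have hle : ∀ t ∈ Ioo c b, L / (2 * K) / (b - t) ≤ P t / p t := fun t ht => by
    obtain ⟨hLt, ht0⟩ := hc ht
    calc L / (2 * K) / (b - t) = L / 2 / (K * (b - t)) := by
          rw [div_div, div_div, mul_assoc]
      _ ≤ P t / p t := div_le_div₀ ((half_pos hLpos).trans hLt).le hLt.le (hp.pos t ht0)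
          (hp.le_mul_sub t ht0)
  have htop : Tendsto w (𝓝[<] b) atTop := tendsto_atTop_of_div_sub_le_deriv hcb (by positivity)
    (fun t ht => hw.hasDerivAt t (hc ht).2) hle
  obtain ⟨t, ht, htb⟩ := ((htop.eventually_gt_atTop M).and (Ioo_mem_nhdsLT hb)).exists
  exact ht.not_ge (hM t htb)

theorem tendsto_flux_right (hw : HasFlux b p w P P') (hM : ∀ t ∈ Ioo 0 b, |w t| ≤ M)
    (hD : ∀ t ∈ Ioo 0 b, |P' t| ≤ D * p t) : Tendsto P (𝓝[<] b) (𝓝 0) := by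
  obtain ⟨-, L, -, hL⟩ := exists_tendsto_of_integrableOn_deriv hb hw.hasDerivAt_flux
    (integrableOn_of_hasDerivAt_of_abs_le hw.hasDerivAt_flux ((hp.integrableOn).const_mul D) hD)
  have hpos := hp.flux_limit_nonpos hb hw (fun t ht => (le_abs_self _).trans (hM t ht)) hL
  have hneg := hp.flux_limit_nonpos hb hw.neg (fun t ht => (neg_le_abs _).trans (hM t ht)) hL.neg
  rwa [le_antisymm hpos (neg_nonpos.1 hneg)] at hL

theorem abs_flux_le (hw : HasFlux b p w P P') (hM : ∀ t ∈ Ioo 0 b, |w t| ≤ M) (hD0 : 0 ≤ D)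
    (hD : ∀ t ∈ Ioo 0 b, |P' t| ≤ D * p t) {t : ℝ} (ht : t ∈ Ioo 0 b) :
    |P t| ≤ D * K * min t (b - t) * p t := by
  rcases le_total t (b / 2) with hhalf | hhalf
  · rw [min_eq_left (by linarith)]
    have hsub : Ioc 0 t ⊆ Ioo 0 b := fun s hs => ⟨hs.1, hs.2.trans_lt ht.2⟩
    calc |P t| ≤ D * (K * p t) * |t - 0| :=
          abs_le_mul_abs_sub_of_tendsto_zero (convex_Ioc 0 t)
            (fun s hs => hw.hasDerivAt_flux s (hsub hs))
            (fun s hs => (hD s (hsub hs)).trans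
              (mul_le_mul_of_nonneg_left (hp.le_of_le_half s t hs.1 hs.2 hhalf) hD0))
            nhdsWithin_le_nhds (Ioc_mem_nhdsGT ht.1) hw.tendsto_flux (right_mem_Ioc.2 ht.1)
      _ = D * K * t * p t := by rw [sub_zero, abs_of_pos ht.1]; ring
  · rw [min_eq_right (by linarith)]
    have hsub : Ico t b ⊆ Ioo 0 b := fun s hs => ⟨ht.1.trans_le hs.1, hs.2⟩
    calc |P t| ≤ D * (K * p t) * |t - b| :=
          abs_le_mul_abs_sub_of_tendsto_zero (convex_Ico t b)
            (fun s hs => hw.hasDerivAt_flux s (hsub hs))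
            (fun s hs => (hD s (hsub hs)).trans
              (mul_le_mul_of_nonneg_left (hp.le_of_half_le s t hhalf hs.1 hs.2) hD0))
            nhdsWithin_le_nhds (Ico_mem_nhdsLT ht.2) (hp.tendsto_flux_right hb hw hM hD)
            (left_mem_Ico.2 ht.2)
      _ = D * K * (b - t) * p t := by rw [abs_sub_comm, abs_of_pos (sub_pos.2 ht.2)]; ring

end UnimodalWeight

end FluxBound

section Picone

/-- Membership in the `C¹` part of the `H¹` space of `(0, b)` with weight `p`. -/
def MemWeightedH1 (b : ℝ) (p w : ℝ → ℝ) : Prop :=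
  ContDiffOn ℝ 1 w (Ioo 0 b) ∧ IntegrableOn (fun t => ((deriv w t) ^ 2 + (w t) ^ 2) * p t) (Ioo 0 b)

theorem MemWeightedH1.hasDerivAt {b : ℝ} {p w : ℝ → ℝ} (hw : MemWeightedH1 b p w) {t : ℝ}
    (ht : t ∈ Ioo 0 b) : HasDerivAt w (deriv w t) t :=
  ((hw.1.differentiableOn one_ne_zero).differentiableAt (Ioo_mem_nhds ht.1 ht.2)).hasDerivAt

theorem MemWeightedH1.continuousOn_deriv {b : ℝ} {p w : ℝ → ℝ} (hw : MemWeightedH1 b p w) :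
    ContinuousOn (deriv w) (Ioo 0 b) :=
  hw.1.continuousOn_deriv_of_isOpen isOpen_Ioo le_rfl

theorem MemWeightedH1.integrableOn_quadratic {b A K : ℝ} {p k w : ℝ → ℝ}
    (hw : MemWeightedH1 b p w) (hp : UnimodalWeight b K p) (hk : ContinuousOn k (Ioo 0 b))
    (hkA : ∀ t ∈ Ioo 0 b, |k t| ≤ A) :
    IntegrableOn (fun t => ((deriv w t) ^ 2 - k t * (w t) ^ 2) * p t) (Ioo 0 b) := by
  refine (hw.2.const_mul (1 + A)).mono' (ContinuousOn.aestronglyMeasurable ?_ measurableSet_Ioo) ?_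
  · have := hw.continuousOn_deriv
    have := hw.1.continuousOn
    have := hp.continuousOn
    fun_prop
  · filter_upwards [ae_restrict_mem measurableSet_Ioo] with t ht
    have hkt := abs_le.1 (hkA t ht)
    rw [Real.norm_eq_abs, abs_mul, abs_of_pos (hp.pos t ht), ← mul_assoc]
    refine mul_le_mul_of_nonneg_right (abs_le.2 ⟨?_, ?_⟩) (hp.pos t ht).le <;>
      nlinarith [sq_nonneg (deriv w t), sq_nonneg (w t)]

/-- A solution `w` of `(p w')' + p k w = 0` on `(0, b)`, with flux `P` vanishing at the origin,
that lies between two positive constants, for a potential `k` bounded by `A`. -/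
structure PositiveSolution (b ε M A : ℝ) (p k w P : ℝ → ℝ) : Prop where
  flux : HasFlux b p w P (fun t => -(p t * (k t * w t)))
  lower_pos : 0 < ε
  mem_Icc : ∀ t ∈ Ioo 0 b, w t ∈ Icc ε M
  potential_continuousOn : ContinuousOn k (Ioo 0 b)
  abs_potential_le : ∀ t ∈ Ioo 0 b, |k t| ≤ A

theorem abs_sq_sub_mul_sq_sub_sq_le {d w k ρ S A : ℝ} (hρ : |ρ| ≤ S) (hk : |k| ≤ A) :
    |d ^ 2 - k * w ^ 2 - (d - ρ * w) ^ 2| ≤ (S + S ^ 2 + A) * (d ^ 2 + w ^ 2) := by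
  have hcross : |ρ * (2 * (d * w))| ≤ S * (d ^ 2 + w ^ 2) := by
    rw [abs_mul]
    refine mul_le_mul hρ ?_ (abs_nonneg _) ((abs_nonneg ρ).trans hρ)
    exact abs_le.2 ⟨by nlinarith [sq_nonneg (d + w)], by nlinarith [sq_nonneg (d - w)]⟩
  have hsq : |ρ ^ 2 * w ^ 2| ≤ S ^ 2 * (d ^ 2 + w ^ 2) := by
    rw [abs_mul, abs_pow, abs_of_nonneg (sq_nonneg w)]
    gcongr
    linarith [sq_nonneg d]
  have hpot : |k * w ^ 2| ≤ A * (d ^ 2 + w ^ 2) := by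
    rw [abs_mul, abs_of_nonneg (sq_nonneg w)]
    refine mul_le_mul hk ?_ (sq_nonneg w) ((abs_nonneg k).trans hk)
    linarith [sq_nonneg d]
  calc |d ^ 2 - k * w ^ 2 - (d - ρ * w) ^ 2|
      = |ρ * (2 * (d * w)) - ρ ^ 2 * w ^ 2 - k * w ^ 2| := by congr 1; ring
    _ ≤ |ρ * (2 * (d * w))| + |ρ ^ 2 * w ^ 2| + |k * w ^ 2| :=
        (abs_sub _ _).trans (add_le_add_left (abs_sub _ _) _)
    _ ≤ (S + S ^ 2 + A) * (d ^ 2 + w ^ 2) := by linarith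

namespace PositiveSolution

variable {b ε M A K : ℝ} {p k w₀ P w : ℝ → ℝ} {t : ℝ} (h : PositiveSolution b ε M A p k w₀ P)
include h

theorem pos (ht : t ∈ Ioo 0 b) : 0 < w₀ t := h.lower_pos.trans_le (h.mem_Icc t ht).1

theorem potentialBound_nonneg (ht : t ∈ Ioo 0 b) : 0 ≤ A :=
  (abs_nonneg _).trans (h.abs_potential_le t ht)

theorem upper_nonneg (ht : t ∈ Ioo 0 b) : 0 ≤ M := (h.pos ht).le.trans (h.mem_Icc t ht).2

theorem hasDerivAt_picone (hp : 0 < p t) (hw : MemWeightedH1 b p w) (ht : t ∈ Ioo 0 b) :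
    HasDerivAt (fun t => P t * w t ^ 2 / w₀ t)
      (((deriv w t) ^ 2 - k t * (w t) ^ 2 - (deriv w t - P t / p t / w₀ t * w t) ^ 2) * p t) t := by
  have hw₀ := h.pos ht
  refine (((h.flux.hasDerivAt_flux t ht).mul ((hw.hasDerivAt ht).pow 2)).div
    (h.flux.hasDerivAt t ht) hw₀.ne').congr_deriv ?_
  simp only [Pi.mul_apply, Pi.pow_apply]
  field_simp
  ring

theorem abs_flux_le (hp : UnimodalWeight b K p) (ht : t ∈ Ioo 0 b) :
    |P t| ≤ A * M * K * min t (b - t) * p t := by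
  refine hp.abs_flux_le (ht.1.trans ht.2) h.flux (M := M) (fun s hs => ?_)
    (mul_nonneg (h.potentialBound_nonneg ht) (h.upper_nonneg ht)) (fun s hs => ?_) ht
  · rw [abs_of_pos (h.pos hs)]
    exact (h.mem_Icc s hs).2
  · rw [abs_neg, abs_mul, abs_mul, abs_of_pos (hp.pos s hs), abs_of_pos (h.pos hs), mul_comm]
    have := h.abs_potential_le s hs
    have := (h.mem_Icc s hs).2
    have := h.upper_nonneg hs
    have := (h.pos hs).le
    have := (hp.pos s hs).le
    gcongr
    exact h.potentialBound_nonneg hs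

theorem abs_flux_div_le (hp : UnimodalWeight b K p) (ht : t ∈ Ioo 0 b) :
    |P t / p t| ≤ A * M * K * b := by
  have hpt := hp.pos t ht
  have hA := h.potentialBound_nonneg ht
  have hM := h.upper_nonneg ht
  have hK := hp.const_pos (ht.1.trans ht.2)
  rw [abs_div, abs_of_pos hpt, div_le_iff₀ hpt]
  refine (h.abs_flux_le hp ht).trans ?_
  gcongr
  exact (min_le_left _ _).trans ht.2.le

theorem integrableOn_picone (hp : UnimodalWeight b K p) (hw : MemWeightedH1 b p w) :
    IntegrableOn (fun t => ((deriv w t) ^ 2 - k t * (w t) ^ 2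
      - (deriv w t - P t / p t / w₀ t * w t) ^ 2) * p t) (Ioo 0 b) := by
  set S := A * M * K * b / ε
  refine integrableOn_of_hasDerivAt_of_abs_le
    (fun t ht => h.hasDerivAt_picone (hp.pos t ht) hw ht)
    (hw.2.const_mul (S + S ^ 2 + A)) (fun t ht => ?_)
  have hlog : |P t / p t / w₀ t| ≤ S := by
    rw [abs_div, abs_of_pos (h.pos ht)]
    exact div_le_div₀ ((abs_nonneg _).trans (h.abs_flux_div_le hp ht)) (h.abs_flux_div_le hp ht)
      h.lower_pos (h.mem_Icc t ht).1
  rw [abs_mul, abs_of_pos (hp.pos t ht), ← mul_assoc]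
  exact mul_le_mul_of_nonneg_right
    (abs_sq_sub_mul_sq_sub_sq_le hlog (h.abs_potential_le t ht)) (hp.pos t ht).le

theorem abs_flux_mul_sq_div_le (hp : UnimodalWeight b K p) (ht : t ∈ Ioo 0 b) :
    |P t * w t ^ 2 / w₀ t| ≤
      min t (b - t) * (A * M * K / ε * (((deriv w t) ^ 2 + (w t) ^ 2) * p t)) := by
  have hε := h.lower_pos
  have hflux := h.abs_flux_le hp ht
  rw [abs_div, abs_mul, abs_of_pos (h.pos ht), abs_of_nonneg (sq_nonneg (w t))]
  calc |P t| * w t ^ 2 / w₀ t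
      ≤ A * M * K * min t (b - t) * p t * ((deriv w t) ^ 2 + w t ^ 2) / ε := by
        gcongr
        · exact mul_nonneg ((abs_nonneg _).trans hflux) (by positivity)
        · exact (abs_nonneg _).trans hflux
        · linarith [sq_nonneg (deriv w t)]
        · exact (h.mem_Icc t ht).1
    _ = _ := by ring

theorem tendsto_flux_mul_sq_div (hp : UnimodalWeight b K p) (hb : 0 < b)
    (hw : MemWeightedH1 b p w) :
    Tendsto (fun t => P t * w t ^ 2 / w₀ t) (𝓝[>] 0) (𝓝 0) ∧
      Tendsto (fun t => P t * w t ^ 2 / w₀ t) (𝓝[<] b) (𝓝 0) := by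
  obtain ⟨L₀, Lb, hL₀, hLb⟩ := exists_tendsto_of_integrableOn_deriv hb
    (fun t ht => h.hasDerivAt_picone (hp.pos t ht) hw ht) (h.integrableOn_picone hp hw)
  have hg : IntervalIntegrable
      (fun t => A * M * K / ε * (((deriv w t) ^ 2 + (w t) ^ 2) * p t)) volume 0 b :=
    (intervalIntegrable_iff_integrableOn_Ioo_of_le hb.le).2 (hw.2.const_mul _)
  have hg0 : ∀ t ∈ Ioo 0 b, 0 ≤ A * M * K / ε * (((deriv w t) ^ 2 + (w t) ^ 2) * p t) :=
    fun t ht => by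
      have := h.potentialBound_nonneg ht
      have := h.upper_nonneg ht
      have := hp.const_pos hb
      have := h.lower_pos
      have := hp.pos t ht
      positivity
  have hL₀_zero : L₀ = 0 := by
    refine eq_zero_of_tendsto_of_abs_le_abs_sub_mul (nhdsGT_le_nhdsNE 0)
      (uIcc_of_le hb.le ▸ Icc_mem_nhdsGT hb) hL₀ ?_ hg
    filter_upwards [Ioo_mem_nhdsGT hb] with t ht
    refine (h.abs_flux_mul_sq_div_le hp ht).trans (mul_le_mul_of_nonneg_right ?_ (hg0 t ht))
    rw [sub_zero, abs_of_pos ht.1]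
    exact min_le_left _ _
  have hLb_zero : Lb = 0 := by
    refine eq_zero_of_tendsto_of_abs_le_abs_sub_mul (nhdsLT_le_nhdsNE b)
      (uIcc_of_le hb.le ▸ Icc_mem_nhdsLT hb) hLb ?_ hg
    filter_upwards [Ioo_mem_nhdsLT hb] with t ht
    refine (h.abs_flux_mul_sq_div_le hp ht).trans (mul_le_mul_of_nonneg_right ?_ (hg0 t ht))
    rw [abs_sub_comm, abs_of_pos (sub_pos.2 ht.2)]
    exact min_le_right _ _
  exact ⟨hL₀_zero ▸ hL₀, hLb_zero ▸ hLb⟩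

theorem integral_quadratic_eq (hp : UnimodalWeight b K p) (hb : 0 < b)
    (hw : MemWeightedH1 b p w) :
    ∫ t in Ioo 0 b, ((deriv w t) ^ 2 - k t * (w t) ^ 2) * p t =
      ∫ t in Ioo 0 b, (deriv w t - P t / p t / w₀ t * w t) ^ 2 * p t := by
  have hquad := hw.integrableOn_quadratic hp h.potential_continuousOn h.abs_potential_le
  have hpic := h.integrableOn_picone hp hw
  have hzero := intervalIntegral.integral_eq_sub_of_hasDerivAt_of_tendsto hb
    (fun t ht => h.hasDerivAt_picone (hp.pos t ht) hw ht)
    ((intervalIntegrable_iff_integrableOn_Ioo_of_le hb.le).2 hpic)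
    (h.tendsto_flux_mul_sq_div hp hb hw).1 (h.tendsto_flux_mul_sq_div hp hb hw).2
  rw [intervalIntegral.integral_of_le hb.le, integral_Ioc_eq_integral_Ioo, sub_zero] at hzero
  calc ∫ t in Ioo 0 b, ((deriv w t) ^ 2 - k t * (w t) ^ 2) * p t
      = (∫ t in Ioo 0 b, ((deriv w t) ^ 2 - k t * (w t) ^ 2) * p t) -
          ∫ t in Ioo 0 b, ((deriv w t) ^ 2 - k t * (w t) ^ 2
            - (deriv w t - P t / p t / w₀ t * w t) ^ 2) * p t := by rw [hzero, sub_zero]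
    _ = ∫ t in Ioo 0 b, (deriv w t - P t / p t / w₀ t * w t) ^ 2 * p t := by
        rw [← integral_sub hquad hpic]
        congr 1 with t
        ring

theorem integral_quadratic_nonneg (hp : UnimodalWeight b K p) (hb : 0 < b)
    (hw : MemWeightedH1 b p w) :
    0 ≤ ∫ t in Ioo 0 b, ((deriv w t) ^ 2 - k t * (w t) ^ 2) * p t := by
  rw [h.integral_quadratic_eq hp hb hw]
  exact setIntegral_nonneg measurableSet_Ioo fun t ht =>
    mul_nonneg (sq_nonneg _) (hp.pos t ht).le

theorem integral_quadratic_self (hp : UnimodalWeight b K p) (hb : 0 < b)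
    (hw₀ : MemWeightedH1 b p w₀) :
    ∫ t in Ioo 0 b, ((deriv w₀ t) ^ 2 - k t * (w₀ t) ^ 2) * p t = 0 := by
  rw [h.integral_quadratic_eq hp hb hw₀]
  refine setIntegral_eq_zero_of_forall_eq_zero fun t ht => ?_
  rw [(h.flux.hasDerivAt t ht).deriv, div_mul_cancel₀ _ (h.pos ht).ne', sub_self,
    zero_pow two_ne_zero, zero_mul]

theorem memWeightedH1 (hp : UnimodalWeight b K p) (hw₀ : ContDiffOn ℝ 1 w₀ (Ioo 0 b)) :
    MemWeightedH1 b p w₀ := by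
  refine ⟨hw₀, (hp.integrableOn.const_mul ((A * M * K * b) ^ 2 + M ^ 2)).mono'
    (ContinuousOn.aestronglyMeasurable ?_ measurableSet_Ioo) ?_⟩
  · have := hw₀.continuousOn_deriv_of_isOpen isOpen_Ioo le_rfl
    have := hw₀.continuousOn
    have := hp.continuousOn
    fun_prop
  · filter_upwards [ae_restrict_mem measurableSet_Ioo] with t ht
    have hpt := hp.pos t ht
    rw [Real.norm_of_nonneg (by positivity), (h.flux.hasDerivAt t ht).deriv, ← sq_abs (P t / p t)]
    have := h.abs_flux_div_le hp ht
    have := (h.pos ht).le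
    have := (h.mem_Icc t ht).2
    gcongr

end PositiveSolution

end Picone

section NonlinearEnergy

theorem HasFlux.contDiffOn_top {b : ℝ} {p w P P' : ℝ → ℝ} (h : HasFlux b p w P P')
    (hp : ContDiffOn ℝ (⊤ : ℕ∞) p (Ioo 0 b)) (hp0 : ∀ t ∈ Ioo 0 b, p t ≠ 0)
    (hP' : ∀ n : ℕ, ContDiffOn ℝ n w (Ioo 0 b) → ContDiffOn ℝ n P' (Ioo 0 b)) :
    ContDiffOn ℝ (⊤ : ℕ∞) w (Ioo 0 b) := by
  suffices hboth : ∀ n : ℕ, ContDiffOn ℝ n w (Ioo 0 b) ∧ ContDiffOn ℝ n P (Ioo 0 b) from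
    contDiffOn_infty.2 fun n => (hboth n).1
  intro n
  induction n with
  | zero =>
    simp only [Nat.cast_zero, contDiffOn_zero]
    exact ⟨fun t ht => (h.hasDerivAt t ht).continuousAt.continuousWithinAt,
      fun t ht => (h.hasDerivAt_flux t ht).continuousAt.continuousWithinAt⟩
  | succ n ih =>
    obtain ⟨hwn, hPn⟩ := ih
    rw [Nat.cast_succ, contDiffOn_succ_iff_deriv_of_isOpen isOpen_Ioo,
      contDiffOn_succ_iff_deriv_of_isOpen isOpen_Ioo]
    refine ⟨⟨fun t ht => (h.hasDerivAt t ht).differentiableAt.differentiableWithinAt, by simp, ?_⟩,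
      ⟨fun t ht => (h.hasDerivAt_flux t ht).differentiableAt.differentiableWithinAt, by simp, ?_⟩⟩
    · exact (hPn.div (contDiffOn_infty.1 hp n) hp0).congr fun t ht => (h.hasDerivAt t ht).deriv
    · exact (hP' n hwn).congr fun t ht => (h.hasDerivAt_flux t ht).deriv

theorem rpow_sub_one_mul_sq_le {q u u₀ : ℝ} (hq : 1 ≤ q) (hu₀ : 0 ≤ u₀) :
    u₀ ^ (q - 1) * u ^ 2 ≤ 2 / (q + 1) * |u| ^ (q + 1) + (q - 1) / (q + 1) * u₀ ^ (q + 1) := by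
  have hq1 : 0 < q + 1 := by linarith
  have hyoung := Real.geom_mean_le_arith_mean2_weighted (w₁ := 2 / (q + 1))
    (w₂ := (q - 1) / (q + 1)) (p₁ := |u| ^ (q + 1)) (p₂ := u₀ ^ (q + 1)) (by positivity)
    (div_nonneg (sub_nonneg.2 hq) hq1.le) (by positivity) (by positivity) (by field_simp; ring)
  rwa [← rpow_mul (abs_nonneg u), ← rpow_mul hu₀, mul_div_cancel₀ _ hq1.ne',
    mul_div_cancel₀ _ hq1.ne', rpow_two, sq_abs, mul_comm] at hyoung

/-- The integrand `(w'² - l w² + 2/(q+1) c |w|^(q+1)) p` of the energy whose Euler–Lagrange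
equation is `(p w')' + p (l w - c w ^ q) = 0`. -/
def energyDensity (l q : ℝ) (p c w : ℝ → ℝ) (t : ℝ) : ℝ :=
  ((deriv w t) ^ 2 - l * (w t) ^ 2 + 2 / (q + 1) * c t * |w t| ^ (q + 1)) * p t

/-- The functions on which `energyDensity` is integrable term by term. -/
def HasFiniteEnergy (b q : ℝ) (p c w : ℝ → ℝ) : Prop :=
  MemWeightedH1 b p w ∧ IntegrableOn (fun t => |w t| ^ (q + 1) * c t * p t) (Ioo 0 b)

variable {b l q ε M A K : ℝ} {p c w₀ P w : ℝ → ℝ}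

theorem HasFiniteEnergy.integrableOn_energyDensity (hw : HasFiniteEnergy b q p c w)
    (hp : UnimodalWeight b K p) : IntegrableOn (energyDensity l q p c w) (Ioo 0 b) := by
  refine ((hw.1.integrableOn_quadratic hp continuousOn_const (fun _ _ => le_refl |l|)).add
    (hw.2.const_mul (2 / (q + 1)))).congr (.of_forall fun t => ?_)
  simp only [Pi.add_apply, energyDensity]
  ring

namespace PositiveSolution

variable (h : PositiveSolution b ε M A p (fun t => l - c t * w₀ t ^ (q - 1)) w₀ P)
include h

theorem hasFiniteEnergy (hp : UnimodalWeight b K p) (hq : 1 < q) (hc : ContinuousOn c (Ioo 0 b))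
    (hc01 : ∀ t ∈ Ioo 0 b, c t ∈ Ioc 0 1) (hw₀ : ContDiffOn ℝ 1 w₀ (Ioo 0 b)) :
    HasFiniteEnergy b q p c w₀ := by
  refine ⟨h.memWeightedH1 hp hw₀, (hp.integrableOn.const_mul (M ^ (q + 1) * 1)).mono'
    (ContinuousOn.aestronglyMeasurable ?_ measurableSet_Ioo) ?_⟩
  · have := hp.continuousOn
    have : ContinuousOn (fun t => |w₀ t| ^ (q + 1)) (Ioo 0 b) :=
      hw₀.continuousOn.abs.rpow_const fun _ _ => Or.inr (by linarith)
    fun_prop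
  · filter_upwards [ae_restrict_mem measurableSet_Ioo] with t ht
    obtain ⟨hc0, hc1⟩ := hc01 t ht
    have hpt := hp.pos t ht
    have hM := (h.mem_Icc t ht).2
    rw [Real.norm_of_nonneg (by positivity), abs_of_pos (h.pos ht)]
    have := h.pos ht
    have := h.upper_nonneg ht
    gcongr

theorem quadratic_le_energyDensity_add (hp : UnimodalWeight b K p) (hq : 1 < q)
    (hc01 : ∀ t ∈ Ioo 0 b, c t ∈ Ioc 0 1) {t : ℝ} (ht : t ∈ Ioo 0 b) :
    ((deriv w t) ^ 2 - (l - c t * w₀ t ^ (q - 1)) * (w t) ^ 2) * p t ≤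
      energyDensity l q p c w t + (q - 1) / (q + 1) * (|w₀ t| ^ (q + 1) * c t * p t) := by
  have hyoung := mul_le_mul_of_nonneg_left
    (rpow_sub_one_mul_sq_le (u := w t) hq.le (h.pos ht).le)
    (mul_pos (hc01 t ht).1 (hp.pos t ht)).le
  rw [abs_of_pos (h.pos ht), energyDensity]
  linarith

theorem quadratic_self_eq_energyDensity_add (hq : 1 < q) {t : ℝ} (ht : t ∈ Ioo 0 b) :
    ((deriv w₀ t) ^ 2 - (l - c t * w₀ t ^ (q - 1)) * (w₀ t) ^ 2) * p t =
      energyDensity l q p c w₀ t + (q - 1) / (q + 1) * (|w₀ t| ^ (q + 1) * c t * p t) := by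
  have hpow : w₀ t ^ (q + 1) = w₀ t ^ (q - 1) * w₀ t ^ 2 := by
    rw [← rpow_natCast, ← rpow_add (h.pos ht)]
    norm_num
    ring_nf
  have hq1 : q + 1 ≠ 0 := by linarith
  rw [abs_of_pos (h.pos ht), energyDensity, abs_of_pos (h.pos ht), hpow]
  field_simp
  ring

variable (hp : UnimodalWeight b K p) (hb : 0 < b) (hq : 1 < q) (hw₀ : HasFiniteEnergy b q p c w₀)
include hp hb hq hw₀

theorem integral_energyDensity_self :
    ∫ t in Ioo 0 b, energyDensity l q p c w₀ t =
      -((q - 1) / (q + 1) * ∫ t in Ioo 0 b, |w₀ t| ^ (q + 1) * c t * p t) := by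
  have hzero := h.integral_quadratic_self hp hb hw₀.1
  rw [setIntegral_congr_fun measurableSet_Ioo
      fun t ht => h.quadratic_self_eq_energyDensity_add hq ht,
    integral_add (hw₀.integrableOn_energyDensity hp) (hw₀.2.const_mul _),
    integral_const_mul] at hzero
  linarith

variable (hc01 : ∀ t ∈ Ioo 0 b, c t ∈ Ioc 0 1)
include hc01

theorem integral_energyDensity_self_neg : ∫ t in Ioo 0 b, energyDensity l q p c w₀ t < 0 := by
  rw [h.integral_energyDensity_self hp hb hq hw₀, neg_lt_zero]
  refine mul_pos (div_pos (sub_pos.2 hq) (by linarith)) ?_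
  have hpos : ∀ t ∈ Ioo 0 b, 0 < |w₀ t| ^ (q + 1) * c t * p t := fun t ht =>
    mul_pos (mul_pos (rpow_pos_of_pos (abs_pos.2 (h.pos ht).ne') _) (hc01 t ht).1) (hp.pos t ht)
  rw [setIntegral_pos_iff_support_of_nonneg_ae
    ((ae_restrict_mem measurableSet_Ioo).mono fun t ht => (hpos t ht).le) hw₀.2,
    inter_eq_right.2 fun t ht => Function.mem_support.2 (hpos t ht).ne']
  simpa using hb

theorem integral_energyDensity_self_le (hw : HasFiniteEnergy b q p c w) :
    ∫ t in Ioo 0 b, energyDensity l q p c w₀ t ≤ ∫ t in Ioo 0 b, energyDensity l q p c w t := by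
  have hE := hw₀.2.const_mul ((q - 1) / (q + 1))
  have hJ := hw.integrableOn_energyDensity (l := l) hp
  have hquad := h.integral_quadratic_nonneg hp hb hw.1
  have hmono := setIntegral_mono_on (hw.1.integrableOn_quadratic hp h.potential_continuousOn
    h.abs_potential_le) (hJ.add hE) measurableSet_Ioo
    fun t ht => h.quadratic_le_energyDensity_add hp hq hc01 ht
  rw [integral_add' hJ hE, integral_const_mul] at hmono
  rw [h.integral_energyDensity_self hp hb hq hw₀]
  linarith

end PositiveSolution

end NonlinearEnergy

section ZonalWeight

/-- The weight `(cos θ)^α (sin θ)^n`, which is the surface measure times the squared ground state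
`ρ_κ²` in zonal coordinates when `n = N - 2`. -/
def zonalWeight (n : ℕ) (α t : ℝ) : ℝ := cos t ^ α * sin t ^ n

theorem cos_pos_of_mem_Ico {t : ℝ} (ht : t ∈ Ico 0 (π / 2)) : 0 < cos t :=
  cos_pos_of_mem_Ioo ⟨by linarith [ht.1, pi_pos], ht.2⟩

theorem sin_pos_of_mem_Ioo {t : ℝ} (ht : t ∈ Ioo 0 (π / 2)) : 0 < sin t :=
  sin_pos_of_pos_of_lt_pi ht.1 (by linarith [ht.2, pi_pos])

theorem continuousOn_cos_rpow (r : ℝ) : ContinuousOn (fun t => cos t ^ r) (Ico 0 (π / 2)) :=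
  continuous_cos.continuousOn.rpow_const fun _ ht => Or.inl (cos_pos_of_mem_Ico ht).ne'

theorem contDiffOn_cos_rpow (r : ℝ) {m : WithTop ℕ∞} :
    ContDiffOn ℝ m (fun t => cos t ^ r) (Ioo 0 (π / 2)) :=
  contDiff_cos.contDiffOn.rpow_const_of_ne fun _ ht =>
    (cos_pos_of_mem_Ico (Ioo_subset_Ico_self ht)).ne'

theorem cos_rpow_mem_Ioc {r t : ℝ} (hr : 0 ≤ r) (ht : t ∈ Ico 0 (π / 2)) :
    cos t ^ r ∈ Ioc 0 1 :=
  have hcos := cos_pos_of_mem_Ico ht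
  ⟨rpow_pos_of_pos hcos r, rpow_le_one hcos.le (cos_le_one t) hr⟩

variable (n : ℕ) {α : ℝ}

theorem zonalWeight_pos {t : ℝ} (ht : t ∈ Ioo 0 (π / 2)) : 0 < zonalWeight n α t :=
  mul_pos (rpow_pos_of_pos (cos_pos_of_mem_Ico (Ioo_subset_Ico_self ht)) α)
    (pow_pos (sin_pos_of_mem_Ioo ht) n)

theorem continuousOn_zonalWeight : ContinuousOn (zonalWeight n α) (Ico 0 (π / 2)) :=
  (continuousOn_cos_rpow α).mul (continuous_sin.pow n).continuousOn

theorem contDiffOn_zonalWeight {m : WithTop ℕ∞} :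
    ContDiffOn ℝ m (zonalWeight n α) (Ioo 0 (π / 2)) :=
  (contDiffOn_cos_rpow α).mul (contDiff_sin.pow n).contDiffOn

theorem zonalWeight_le_cos (hα : 1 ≤ α) {t : ℝ} (ht : t ∈ Ioo 0 (π / 2)) :
    zonalWeight n α t ≤ cos t := by
  have hcos := cos_pos_of_mem_Ico (Ioo_subset_Ico_self ht)
  calc cos t ^ α * sin t ^ n ≤ cos t ^ (1 : ℝ) * 1 :=
        mul_le_mul (rpow_le_rpow_of_exponent_ge hcos (cos_le_one t) hα)
          (pow_le_one₀ (sin_pos_of_mem_Ioo ht).le (sin_le_one t))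
          (pow_nonneg (sin_pos_of_mem_Ioo ht).le n) (rpow_nonneg hcos.le _)
    _ = cos t := by rw [rpow_one, mul_one]

theorem mul_le_of_mem_unitInterval_of_le_or_le {x y z : ℝ} (hx : x ∈ Icc 0 1) (hy : y ∈ Icc 0 1)
    (h : x ≤ z ∨ y ≤ z) : x * y ≤ z :=
  h.elim (mul_le_of_le_one_right hx.1 hy.2).trans (mul_le_of_le_one_left hy.1 hx.2).trans

-- The factor of the weight that varies the wrong way is compared with its value at the midpoint.
theorem zonalWeight_mul_mid_le (hα : 0 ≤ α) {s t : ℝ} (hs : s ∈ Ioo 0 (π / 2))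
    (ht : t ∈ Ioo 0 (π / 2)) (hst : s ≤ t ∧ t ≤ π / 2 / 2 ∨ π / 2 / 2 ≤ t ∧ t ≤ s) :
    zonalWeight n α s * zonalWeight n α (π / 2 / 2) ≤ zonalWeight n α t := by
  have hmid : π / 2 / 2 ∈ Ioo 0 (π / 2) := ⟨by positivity, half_lt_self (by positivity)⟩
  have hcos : ∀ x ∈ Ioo 0 (π / 2), cos x ^ α ∈ Icc 0 1 := fun x hx =>
    Ioc_subset_Icc_self (cos_rpow_mem_Ioc hα (Ioo_subset_Ico_self hx))
  have hsin : ∀ x ∈ Ioo 0 (π / 2), sin x ^ n ∈ Icc 0 1 := fun x hx =>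
    have hx0 := (sin_pos_of_mem_Ioo hx).le
    ⟨pow_nonneg hx0 n, pow_le_one₀ hx0 (sin_le_one x)⟩
  have hcos_anti : AntitoneOn (fun x => cos x ^ α) (Ioo 0 (π / 2)) := fun x hx y hy hxy =>
    rpow_le_rpow (cos_pos_of_mem_Ico (Ioo_subset_Ico_self hy)).le
      (cos_le_cos_of_nonneg_of_le_pi hx.1.le (by linarith [hy.2, pi_pos]) hxy) hα
  have hsin_mono : MonotoneOn (fun x => sin x ^ n) (Ioo 0 (π / 2)) := fun x hx y hy hxy =>
    pow_le_pow_left₀ (sin_pos_of_mem_Ioo hx).le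
      (sin_le_sin_of_le_of_le_pi_div_two (by linarith [hx.1, pi_pos]) hy.2.le hxy) n
  have hcos_mul : cos s ^ α * cos (π / 2 / 2) ^ α ≤ cos t ^ α :=
    mul_le_of_mem_unitInterval_of_le_or_le (hcos s hs) (hcos _ hmid)
      (hst.symm.imp (fun h => hcos_anti ht hs h.2) fun h => hcos_anti ht hmid h.2)
  have hsin_mul : sin s ^ n * sin (π / 2 / 2) ^ n ≤ sin t ^ n :=
    mul_le_of_mem_unitInterval_of_le_or_le (hsin s hs) (hsin _ hmid)
      (hst.imp (fun h => hsin_mono hs ht h.1) fun h => hsin_mono hmid ht h.1)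
  calc zonalWeight n α s * zonalWeight n α (π / 2 / 2)
      = cos s ^ α * cos (π / 2 / 2) ^ α * (sin s ^ n * sin (π / 2 / 2) ^ n) :=
        mul_mul_mul_comm _ _ _ _
    _ ≤ zonalWeight n α t :=
        mul_le_mul hcos_mul hsin_mul (mul_nonneg (hsin s hs).1 (hsin _ hmid).1) (hcos t ht).1

theorem unimodalWeight_zonalWeight (hα : 1 ≤ α) :
    UnimodalWeight (π / 2) (zonalWeight n α (π / 2 / 2))⁻¹ (zonalWeight n α) := by
  have hmid : π / 2 / 2 ∈ Ioo 0 (π / 2) := ⟨by positivity, half_lt_self (by positivity)⟩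
  have hα0 : 0 ≤ α := zero_le_one.trans hα
  refine ⟨(continuousOn_zonalWeight n).mono Ioo_subset_Ico_self, fun t => zonalWeight_pos n,
    fun s t hs hst ht => ?_, fun s t ht hts hs => ?_, fun t ht => ?_⟩
  · rw [le_inv_mul_iff₀' (zonalWeight_pos n hmid)]
    exact zonalWeight_mul_mid_le n hα0 ⟨hs, (hst.trans ht).trans_lt hmid.2⟩
      ⟨hs.trans_le hst, ht.trans_lt hmid.2⟩ (Or.inl ⟨hst, ht⟩)
  · rw [le_inv_mul_iff₀' (zonalWeight_pos n hmid)]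
    exact zonalWeight_mul_mid_le n hα0 ⟨hmid.1.trans_le (ht.trans hts), hs⟩
      ⟨hmid.1.trans_le ht, hts.trans_lt hs⟩ (Or.inr ⟨ht, hts⟩)
  · have hK : 1 ≤ (zonalWeight n α (π / 2 / 2))⁻¹ := (one_le_inv₀ (zonalWeight_pos n hmid)).2
      ((zonalWeight_le_cos n hα hmid).trans (cos_le_one _))
    calc zonalWeight n α t ≤ sin (π / 2 - t) := by
          rw [sin_pi_div_two_sub]
          exact zonalWeight_le_cos n hα ht
      _ ≤ π / 2 - t := sin_le (sub_nonneg.2 ht.2.le)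
      _ ≤ _ := le_mul_of_one_le_left (sub_nonneg.2 ht.2.le) hK

theorem hasDerivAt_zonalWeight_mul_sin {t : ℝ} (ht : t ∈ Ico 0 (π / 2)) :
    HasDerivAt (fun t => zonalWeight n α t * sin t)
      (zonalWeight n α t * ((n + 1) * cos t - α * sin t ^ 2 / cos t)) t := by
  have hcos := cos_pos_of_mem_Ico ht
  have hcosα := (hasDerivAt_cos t).rpow_const (p := α) (Or.inl hcos.ne')
  have hsin := (hasDerivAt_sin t).pow (n + 1)
  refine ((hcosα.mul hsin).congr_deriv ?_).congr_of_eventuallyEq (.of_forall fun s => ?_)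
  · simp only [Pi.pow_apply, rpow_sub_one hcos.ne', zonalWeight, Nat.cast_succ, Nat.add_sub_cancel]
    field_simp
    ring
  · simp only [Pi.mul_apply, Pi.pow_apply, zonalWeight, pow_succ, mul_assoc]

theorem hasFlux_zonalWeight {v k k' : ℝ → ℝ}
    (hv : ∀ t ∈ Ioo 0 (π / 2), HasDerivAt v (sin t * k t) t)
    (hk : ∀ t ∈ Ico 0 (π / 2), HasDerivAt k (k' t) t) :
    HasFlux (π / 2) (zonalWeight n α) v (fun t => zonalWeight n α t * sin t * k t)
      (fun t => zonalWeight n α t *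
        (((n + 1) * cos t - α * sin t ^ 2 / cos t) * k t + sin t * k' t)) where
  hasDerivAt t ht := (hv t ht).congr_deriv <| by
    have := (zonalWeight_pos n ht (α := α)).ne'
    field_simp
  hasDerivAt_flux t ht := by
    have htIco := Ioo_subset_Ico_self ht
    refine ((hasDerivAt_zonalWeight_mul_sin n htIco).mul (hk t htIco)).congr_deriv ?_
    ring
  tendsto_flux := by
    have h0 : (0 : ℝ) ∈ Ico 0 (π / 2) := ⟨le_rfl, by positivity⟩
    have hcont := ((hasDerivAt_zonalWeight_mul_sin n h0 (α := α)).mul (hk 0 h0)).continuousAt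
    simpa [Pi.mul_def] using hcont.tendsto.mono_left nhdsWithin_le_nhds

end ZonalWeight

section ZonalBarriers

theorem monotoneOn_mul_sub_mul_rpow {a c q M : ℝ} (hq : 1 ≤ q) (hc : c ∈ Icc 0 1)
    (ha : q * M ^ (q - 1) ≤ a) : MonotoneOn (fun x => a * x - c * x ^ q) (Icc 0 M) := by
  have hderiv : ∀ x : ℝ, HasDerivAt (fun x => a * x - c * x ^ q)
      (a * 1 - c * (q * x ^ (q - 1))) x := fun x =>
    ((hasDerivAt_id x).const_mul a).sub ((hasDerivAt_rpow_const (Or.inr hq)).const_mul c)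
  refine monotoneOn_of_deriv_nonneg (convex_Icc 0 M)
    (fun x _ => (hderiv x).continuousAt.continuousWithinAt)
    (fun x _ => (hderiv x).differentiableAt.differentiableWithinAt) fun x hx => ?_
  rw [interior_Icc] at hx
  rw [(hderiv x).deriv, mul_one, sub_nonneg]
  have hx0 := rpow_nonneg hx.1.le (q - 1)
  calc c * (q * x ^ (q - 1)) ≤ q * x ^ (q - 1) :=
        mul_le_of_le_one_left (by positivity) hc.2
    _ ≤ q * M ^ (q - 1) := by gcongr <;> linarith [hx.1, hx.2]
    _ ≤ a := ha

-- Near `x = 0` the term `4 l` dominates and the absorption is not needed; away from `x = 0` the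
-- absorption is made larger than `l + Q` by the choice of `M`.
theorem exists_sub_rpow_mul_exp_rpow_le {l q r Q : ℝ} (hl : 0 < l) (hq : 1 < q) (hr : 0 ≤ r)
    (hQ : 0 < Q) : ∃ M : ℝ, 0 < M ∧ ∀ x ∈ Ioc (0 : ℝ) 1,
      l - x ^ r * (M * exp (-l * x ^ 2)) ^ (q - 1) ≤ 4 * l - Q * x ^ 2 := by
  set x₀ : ℝ := √(3 * l / Q)
  have : 0 < x₀ := by positivity
  set Y : ℝ := ((l + Q) / x₀ ^ r) ^ (q - 1)⁻¹
  have hYq : Y ^ (q - 1) = (l + Q) / x₀ ^ r := rpow_inv_rpow (by positivity) (sub_ne_zero.2 hq.ne')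
  refine ⟨exp l * Y, by positivity, fun x hx => ?_⟩
  have hx2 : x ^ 2 ≤ 1 := pow_le_one₀ hx.1.le hx.2
  rcases le_total x x₀ with hle | hge
  · have hnonneg : 0 ≤ x ^ r * (exp l * Y * exp (-l * x ^ 2)) ^ (q - 1) := by
      have := hx.1
      positivity
    have hQx : Q * x ^ 2 ≤ 3 * l := by
      rw [← le_div_iff₀' hQ, ← Real.sq_sqrt (show 0 ≤ 3 * l / Q by positivity)]
      exact pow_le_pow_left₀ hx.1.le hle 2
    linarith
  · have hY : Y ≤ exp l * Y * exp (-l * x ^ 2) := by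
      rw [mul_right_comm, ← exp_add]
      exact le_mul_of_one_le_left (by positivity) (one_le_exp (by nlinarith))
    have habsorb : l + Q ≤ x ^ r * (exp l * Y * exp (-l * x ^ 2)) ^ (q - 1) :=
      calc l + Q = x₀ ^ r * Y ^ (q - 1) := by rw [hYq, mul_div_cancel₀ _ (by positivity)]
        _ ≤ _ := by
            have := hx.1.le
            gcongr
    nlinarith

variable (n : ℕ) {α l q : ℝ}

theorem doobWeight_cos_rpow {m : ℝ} (hm : 0 < m) :
    DoobWeight (π / 2) (zonalWeight n α) (fun t => cos t ^ m)
      (fun t => zonalWeight n α t * sin t * (m * cos t ^ (-m - 1)))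
      (fun t => zonalWeight n α t / cos t ^ m *
        (m * (n + 1 + (m + 1 - α) * (sin t / cos t) ^ 2))) where
  coeff_continuousOn := continuousOn_zonalWeight n
  coeff_pos t := zonalWeight_pos n
  continuousOn := continuous_cos.continuousOn.rpow_const fun _ _ => Or.inr hm.le
  pos t ht := rpow_pos_of_pos (cos_pos_of_mem_Ico ht) m
  right_eq_zero := by rw [cos_pi_div_two, zero_rpow hm.ne']
  flux_inv := by
    refine (hasFlux_zonalWeight n (k := fun t => m * cos t ^ (-m - 1))
      (k' := fun t => m * (-sin t * (-m - 1) * cos t ^ (-m - 1 - 1)))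
      (fun t ht => ?_) (fun t ht => ?_)).congr fun t ht => ?_
    · have hcos := cos_pos_of_mem_Ico (Ioo_subset_Ico_self ht)
      refine (((hasDerivAt_cos t).rpow_const (p := m) (Or.inl hcos.ne')).fun_inv
        (rpow_pos_of_pos hcos m).ne').congr_deriv ?_
      rw [rpow_sub_one hcos.ne', rpow_sub_one hcos.ne', rpow_neg hcos.le]
      field_simp
    · exact ((hasDerivAt_cos t).rpow_const (Or.inl (cos_pos_of_mem_Ico ht).ne')).const_mul m
    · have hcos := cos_pos_of_mem_Ico (Ioo_subset_Ico_self ht)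
      simp only [rpow_sub_one hcos.ne', rpow_neg hcos.le]
      field_simp
      ring
  source_continuousOn := by
    have hcos : ∀ t ∈ Ico 0 (π / 2), cos t ≠ 0 := fun t ht => (cos_pos_of_mem_Ico ht).ne'
    have hcosm : ∀ t ∈ Ico 0 (π / 2), cos t ^ m ≠ 0 := fun t ht =>
      (rpow_pos_of_pos (cos_pos_of_mem_Ico ht) m).ne'
    have := continuousOn_zonalWeight n (α := α)
    have := continuousOn_cos_rpow m
    fun_prop (disch := assumption)

theorem hasFlux_mul_exp_neg_mul_cos_sq (l M : ℝ) :
    HasFlux (π / 2) (zonalWeight n α) (fun t => M * exp (-l * cos t ^ 2))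
      (fun t => zonalWeight n α t * sin t * (2 * l * cos t * (M * exp (-l * cos t ^ 2))))
      (fun t => -(zonalWeight n α t * (M * exp (-l * cos t ^ 2) *
        (2 * l * (α + 1) * sin t ^ 2 - 2 * l * (n + 1) * cos t ^ 2
          - 4 * l ^ 2 * cos t ^ 2 * sin t ^ 2)))) := by
  have hderiv : ∀ t, HasDerivAt (fun t => M * exp (-l * cos t ^ 2))
      (sin t * (2 * l * cos t * (M * exp (-l * cos t ^ 2)))) t := fun t => by
    refine (((((hasDerivAt_cos t).fun_pow 2).const_mul (-l)).exp).const_mul M).congr_deriv ?_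
    push_cast
    ring
  refine (hasFlux_zonalWeight n (fun t _ => hderiv t)
    fun t _ => ((hasDerivAt_cos t).const_mul (2 * l)).mul (hderiv t)).congr fun t ht => ?_
  have hcos := cos_pos_of_mem_Ico (Ioo_subset_Ico_self ht)
  field_simp
  ring

theorem exists_zonal_supersolution (hα : 1 ≤ α) (hl : 0 < l) (hq : 1 < q) :
    ∃ M : ℝ, 0 < M ∧ ∀ t ∈ Ico 0 (π / 2),
      l - cos t ^ ((q - 1) * α / 2) * (M * exp (-l * cos t ^ 2)) ^ (q - 1) ≤
        2 * l * (α + 1) * sin t ^ 2 - 2 * l * (n + 1) * cos t ^ 2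
          - 4 * l ^ 2 * cos t ^ 2 * sin t ^ 2 := by
  have : 0 ≤ α := zero_le_one.trans hα
  have : 0 ≤ q - 1 := sub_nonneg.2 hq.le
  obtain ⟨M, hM, hle⟩ := exists_sub_rpow_mul_exp_rpow_le (r := (q - 1) * α / 2)
    (Q := 2 * l * (α + 1) + 2 * l * (n + 1) + 4 * l ^ 2) hl hq (by positivity) (by positivity)
  refine ⟨M, hM, fun t ht => (hle _ ⟨cos_pos_of_mem_Ico ht, cos_le_one t⟩).trans ?_⟩
  rw [sin_sq]
  nlinarith [sq_nonneg (l * cos t ^ 2), mul_le_mul_of_nonneg_left hα hl.le]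

end ZonalBarriers

section ZonalMinimizer

/-- The coefficient `ρ_κ^(q-1) = (cos θ)^((q-1)α/2)` of the absorption term in zonal coordinates. -/
def zonalAbsorption (α q t : ℝ) : ℝ := cos t ^ ((q - 1) * α / 2)

/-- The nonlinearity of the Euler–Lagrange equation `(p w')' + p f(t, w) = 0` of the zonal
energy, with `p = zonalWeight n α`. -/
def zonalReaction (α l q t x : ℝ) : ℝ := l * x - zonalAbsorption α q t * x ^ q

variable (n : ℕ) {α l q M : ℝ}

theorem zonalAbsorption_mem_Ioc (hα : 0 ≤ α) (hq : 1 ≤ q) {t : ℝ} (ht : t ∈ Ico 0 (π / 2)) :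
    zonalAbsorption α q t ∈ Ioc 0 1 :=
  cos_rpow_mem_Ioc (div_nonneg (mul_nonneg (sub_nonneg.2 hq) hα) zero_le_two) ht

theorem continuousOn_zonalReaction (hq : 0 ≤ q) :
    ContinuousOn (Function.uncurry (zonalReaction α l q)) (Ico 0 (π / 2) ×ˢ univ) := by
  have habs : ContinuousOn (fun x : ℝ × ℝ => zonalAbsorption α q x.1) (Ico 0 (π / 2) ×ˢ univ) :=
    (continuousOn_cos_rpow _).comp continuousOn_fst fun x hx => hx.1
  have hpow : ContinuousOn (fun x : ℝ × ℝ => x.2 ^ q) (Ico 0 (π / 2) ×ˢ univ) :=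
    continuousOn_snd.rpow_const fun _ _ => Or.inr hq
  exact (continuousOn_const.mul continuousOn_snd).sub (habs.mul hpow)

theorem zonalReaction_nonneg (hα : 0 ≤ α) (hq : 1 ≤ q) {t x : ℝ} (ht : t ∈ Ico 0 (π / 2))
    (hx : 0 < x) (hxl : x ^ (q - 1) ≤ l) : 0 ≤ zonalReaction α l q t x :=
  sub_nonneg.2 <| calc
    zonalAbsorption α q t * x ^ q ≤ x ^ q :=
      mul_le_of_le_one_left (rpow_nonneg hx.le q) (zonalAbsorption_mem_Ioc hα hq ht).2
    _ = x ^ (q - 1) * x := by rw [← rpow_add_one hx.ne', sub_add_cancel]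
    _ ≤ l * x := by gcongr

theorem zonalReaction_eq_mul {t x : ℝ} (hx : 0 < x) :
    zonalReaction α l q t x = (l - zonalAbsorption α q t * x ^ (q - 1)) * x := by
  rw [sub_mul, mul_assoc, ← rpow_add_one hx.ne', sub_add_cancel, zonalReaction]

theorem monotoneOn_doob_zonalReaction {m : ℝ} (hα : 0 ≤ α) (hl : 0 ≤ l) (hq : 1 ≤ q)
    (hm : 0 ≤ m) (hαm : α ≤ m) (hMm : q * M ^ (q - 1) ≤ m) {t : ℝ} (ht : t ∈ Ico 0 (π / 2)) :
    MonotoneOn (fun x => zonalWeight n α t / cos t ^ m *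
        (m * (n + 1 + (m + 1 - α) * (sin t / cos t) ^ 2)) * x +
      zonalWeight n α t / cos t ^ m * zonalReaction α l q t x) (Icc 0 M) := by
  have hcos := cos_pos_of_mem_Ico ht
  have hsin : 0 ≤ sin t := sin_nonneg_of_nonneg_of_le_pi ht.1 (by linarith [ht.2, pi_pos])
  have hweight : 0 ≤ zonalWeight n α t / cos t ^ m := by
    rw [zonalWeight]
    positivity
  have hpotential : m ≤ m * (n + 1 + (m + 1 - α) * (sin t / cos t) ^ 2) := by
    have : 0 ≤ m + 1 - α := by linarith
    refine le_mul_of_one_le_right hm ?_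
    rw [add_right_comm]
    exact le_add_of_nonneg_left (by positivity)
  have hmono := monotoneOn_mul_sub_mul_rpow (M := M) hq
    (Ioc_subset_Icc_self (zonalAbsorption_mem_Ioc hα hq ht))
    (hMm.trans (hpotential.trans (le_add_of_nonneg_right hl)))
  intro x hx y hy hxy
  have hscaled := mul_le_mul_of_nonneg_left (hmono hx hy hxy) hweight
  simp only [zonalReaction]
  linear_combination hscaled

theorem exists_zonalWeight_mul_zonalReaction_le (hα : 1 ≤ α) (hl : 0 < l) (hq : 1 < q) :
    ∃ M : ℝ, 0 < M ∧ ∀ t ∈ Ioo 0 (π / 2),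
      zonalWeight n α t * zonalReaction α l q t (M * exp (-l * cos t ^ 2)) ≤
        zonalWeight n α t * (M * exp (-l * cos t ^ 2) *
          (2 * l * (α + 1) * sin t ^ 2 - 2 * l * (n + 1) * cos t ^ 2
            - 4 * l ^ 2 * cos t ^ 2 * sin t ^ 2)) := by
  obtain ⟨M, hM, hsuper⟩ := exists_zonal_supersolution n hα hl hq
  refine ⟨M, hM, fun t ht => mul_le_mul_of_nonneg_left ?_ (zonalWeight_pos n ht).le⟩
  rw [zonalReaction_eq_mul (by positivity), mul_comm (_ - _)]
  exact mul_le_mul_of_nonneg_left (hsuper t (Ioo_subset_Ico_self ht)) (by positivity)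

theorem exists_hasFlux_zonalReaction_mem_Icc (hα : 1 ≤ α) (hl : 0 < l) (hq : 1 < q) :
    ∃ (ε M : ℝ) (w P : ℝ → ℝ), 0 < ε ∧ (∀ t ∈ Ioo 0 (π / 2), w t ∈ Icc ε M) ∧
      HasFlux (π / 2) (zonalWeight n α) w P
        (fun t => -(zonalWeight n α t * zonalReaction α l q t (w t))) := by
  obtain ⟨M, hM, hsuper⟩ := exists_zonalWeight_mul_zonalReaction_le n hα hl hq
  have hα0 : 0 < α := zero_lt_one.trans_le hα
  set ε := min (l ^ (q - 1)⁻¹) (M * exp (-l))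
  have hε : 0 < ε := lt_min (by positivity) (by positivity)
  have hεl : ε ^ (q - 1) ≤ l := (rpow_le_rpow hε.le (min_le_left _ _) (sub_nonneg.2 hq.le)).trans_eq
    (rpow_inv_rpow hl.le (sub_ne_zero.2 hq.ne'))
  have hε_le : ∀ t, ε ≤ M * exp (-l * cos t ^ 2) := fun t => (min_le_right _ _).trans <| by
    gcongr
    nlinarith [cos_sq_le_one t]
  have hle_M : ∀ t, M * exp (-l * cos t ^ 2) ≤ M := fun t =>
    mul_le_of_le_one_right hM.le (exp_le_one_iff.2 (by nlinarith [sq_nonneg (cos t)]))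
  have hsub : ∀ t ∈ Ioo 0 (π / 2), -(0 : ℝ → ℝ) t ≤ zonalWeight n α t * zonalReaction α l q t ε :=
    fun t ht => by
    rw [Pi.zero_apply, neg_zero]
    exact mul_nonneg (zonalWeight_pos n ht).le
      (zonalReaction_nonneg hα0.le hq.le (Ioo_subset_Ico_self ht) hε hεl)
  have hmono : ∀ t ∈ Ico 0 (π / 2), _ := fun t => monotoneOn_doob_zonalReaction n (M := M)
    (m := α + q * M ^ (q - 1)) hα0.le hl.le hq.le (by positivity)
    (le_add_of_nonneg_right (by positivity)) (le_add_of_nonneg_left hα0.le) (t := t)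
  obtain ⟨w, P, hw, hflux⟩ := (doobWeight_cos_rpow n (m := α + q * M ^ (q - 1))
    (by positivity)).exists_hasFlux_between (by positivity)
    (continuousOn_zonalReaction (zero_le_one.trans hq.le)) (hasFlux_const (π / 2) ε _)
    (hasFlux_mul_exp_neg_mul_cos_sq n l M) continuousOn_const (by fun_prop) (fun t _ => hε_le t)
    hsub (fun t ht => (hsuper t ht).trans_eq (neg_neg _).symm)
    (fun t ht => by
      have hle := hmono t ht (left_mem_Icc.2 hM.le) ⟨hε.le, (hε_le t).trans (hle_M t)⟩ hε.le
      simpa [zonalReaction, (zero_lt_one.trans hq).ne'] using hle)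
    (fun t ht => (hmono t ht).mono (Icc_subset_Icc hε.le (hle_M t)))
  exact ⟨ε, M, w, P, hε, fun t ht => ⟨(hw t ht).1, (hw t ht).2.trans (hle_M t)⟩, hflux⟩

theorem exists_positiveSolution_zonal (hα : 1 ≤ α) (hl : 0 < l) (hq : 1 < q) :
    ∃ (ε M A : ℝ) (w P : ℝ → ℝ), PositiveSolution (π / 2) ε M A (zonalWeight n α)
      (fun t => l - zonalAbsorption α q t * w t ^ (q - 1)) w P := by
  obtain ⟨ε, M, w, P, hε, hw, hflux⟩ := exists_hasFlux_zonalReaction_mem_Icc n hα hl hq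
  have hpos : ∀ t ∈ Ioo 0 (π / 2), 0 < w t := fun t ht => hε.trans_le (hw t ht).1
  refine ⟨ε, M, l + M ^ (q - 1), w, P, hflux.congr fun t ht => ?_, hε, hw, ?_, fun t ht => ?_⟩
  · rw [zonalReaction_eq_mul (hpos t ht)]
  · have hwc : ContinuousOn w (Ioo 0 (π / 2)) := fun t ht =>
      (hflux.hasDerivAt t ht).continuousAt.continuousWithinAt
    exact continuousOn_const.sub (((continuousOn_cos_rpow _).mono Ioo_subset_Ico_self).mul
      (hwc.rpow_const fun t ht => Or.inl (hpos t ht).ne'))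
  · obtain ⟨hc0, hc1⟩ := zonalAbsorption_mem_Ioc (zero_le_one.trans hα) hq.le
      (Ioo_subset_Ico_self ht)
    have hw0 := rpow_pos_of_pos (hpos t ht) (q - 1)
    have hwM : w t ^ (q - 1) ≤ M ^ (q - 1) :=
      rpow_le_rpow (hpos t ht).le (hw t ht).2 (sub_nonneg.2 hq.le)
    rw [abs_le]
    constructor <;> nlinarith

theorem zonalJ_eq_integral_energyDensity (ℓ μ₁ : ℝ) (w : ℝ → ℝ) :
    zonalJ (n + 2) α ℓ μ₁ q w = ∫ t in Ioo 0 (π / 2),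
      energyDensity (ℓ - μ₁) q (zonalWeight n α) (zonalAbsorption α q) w t := by
  simp only [zonalJ, energyDensity, zonalWeight, zonalAbsorption, Nat.add_sub_cancel, mul_assoc]

theorem zonalAdmissible_iff_hasFiniteEnergy {w : ℝ → ℝ} :
    ZonalAdmissible (n + 2) α q w ↔
      HasFiniteEnergy (π / 2) q (zonalWeight n α) (zonalAbsorption α q) w := by
  have hcos : ∀ t ∈ Ioo 0 (π / 2), cos t ^ ((q + 1) * α / 2) =
      zonalAbsorption α q t * cos t ^ α := fun t ht => by
    rw [zonalAbsorption, ← rpow_add (cos_pos_of_mem_Ico (Ioo_subset_Ico_self ht))]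
    ring_nf
  rw [ZonalAdmissible, HasFiniteEnergy, MemWeightedH1, and_assoc]
  refine and_congr_right fun _ => and_congr ?_ (integrableOn_congr_fun (fun t ht => ?_)
    measurableSet_Ioo)
  · simp only [zonalWeight, Nat.add_sub_cancel, mul_assoc]
  · simp only [hcos t ht, zonalWeight, Nat.add_sub_cancel, mul_assoc]

theorem PositiveSolution.contDiffOn_zonal {ε M A : ℝ} {w P : ℝ → ℝ}
    (h : PositiveSolution (π / 2) ε M A (zonalWeight n α)
      (fun t => l - zonalAbsorption α q t * w t ^ (q - 1)) w P) :
    ContDiffOn ℝ (⊤ : ℕ∞) w (Ioo 0 (π / 2)) :=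
  h.flux.contDiffOn_top (contDiffOn_zonalWeight n) (fun _ ht => (zonalWeight_pos n ht).ne')
    fun _ hw => ((contDiffOn_zonalWeight n).mul ((contDiffOn_const.sub
      ((contDiffOn_cos_rpow _).mul (hw.rpow_const_of_ne fun _ ht => (h.pos ht).ne'))).mul hw)).neg

theorem zonal_minimizer_exists_general {α q ℓ μ₁ : ℝ} (hα : 1 ≤ α) (hq : 1 < q) (hℓ : μ₁ < ℓ) :
    ∃ w₀ : ℝ → ℝ,
      ZonalAdmissible (n + 2) α q w₀ ∧
      (∀ θ ∈ Ioo 0 (π / 2), 0 ≤ w₀ θ) ∧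
      ContDiffOn ℝ (⊤ : ℕ∞) w₀ (Ioo 0 (π / 2)) ∧
      zonalJ (n + 2) α ℓ μ₁ q w₀ < 0 ∧
      ∀ w : ℝ → ℝ, ZonalAdmissible (n + 2) α q w →
        zonalJ (n + 2) α ℓ μ₁ q w₀ ≤ zonalJ (n + 2) α ℓ μ₁ q w := by
  obtain ⟨ε, M, A, w₀, P, h⟩ := exists_positiveSolution_zonal n hα (sub_pos.2 hℓ) hq
  have hp := unimodalWeight_zonalWeight n hα
  have hsmooth := h.contDiffOn_zonal n
  have hb : 0 < π / 2 := by positivity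
  have hc01 : ∀ t ∈ Ioo 0 (π / 2), zonalAbsorption α q t ∈ Ioc 0 1 := fun t ht =>
    zonalAbsorption_mem_Ioc (zero_le_one.trans hα) hq.le (Ioo_subset_Ico_self ht)
  have hfinite := h.hasFiniteEnergy hp hq ((continuousOn_cos_rpow _).mono Ioo_subset_Ico_self)
    hc01 (hsmooth.of_le (by exact_mod_cast le_top))
  simp only [zonalJ_eq_integral_energyDensity, zonalAdmissible_iff_hasFiniteEnergy]
  exact ⟨w₀, hfinite, fun t ht => (h.pos ht).le, hsmooth,
    h.integral_energyDensity_self_neg hp hb hq hfinite hc01,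
    fun w => h.integral_energyDensity_self_le hp hb hq hfinite hc01⟩

end ZonalMinimizer

end

/-- existence of a nontrivial nonnegative smooth minimizer of the zonal
energy functional `𝒥_κ` in the subcritical range `1 < q < q_c` (where
`ℓ_{N,q} > μ_{κ,1}`): there is an admissible nonnegative smooth `w₀` with `J(w₀) < 0`
minimizing `J` among all admissible functions. -/
theorem zonal_minimizer_exists (N : ℕ) (hN : 2 ≤ N) (κ : ℝ)
    (hκ0 : 0 < κ) (hκ4 : κ ≤ 1/4) (α : ℝ) (hα : α = 1 + Real.sqrt (1 - 4*κ))
    (q : ℝ) (hq1 : 1 < q) (hqc : q < (2*(N : ℝ) + α) / (2*(N : ℝ) - 4 + α))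
    (ℓ μ₁ : ℝ)
    (hℓ : ℓ = (2/(q-1)) * (2*q/(q-1) - (N : ℝ)))
    (hμ₁ : μ₁ = (α/2) * ((N : ℝ) + α/2 - 2))
    (hℓμ : ℓ > μ₁) :
    ∃ w₀ : ℝ → ℝ,
      ZonalAdmissible N α q w₀ ∧
      (∀ θ ∈ Set.Ioo 0 (π/2), 0 ≤ w₀ θ) ∧
      ContDiffOn ℝ (⊤ : ℕ∞) w₀ (Set.Ioo 0 (π/2)) ∧
      zonalJ N α ℓ μ₁ q w₀ < 0 ∧
      ∀ w : ℝ → ℝ, ZonalAdmissible N α q w → zonalJ N α ℓ μ₁ q w₀ ≤ zonalJ N α ℓ μ₁ q w := by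
  obtain ⟨n, rfl⟩ := Nat.exists_eq_add_of_le' hN
  exact zonal_minimizer_exists_general n (by rw [hα]; linarith [Real.sqrt_nonneg (1 - 4 * κ)])
    hq1 hℓμ
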